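/- arXiv:math/0406062 — 9 statements merged into one kernel-verified Lean document; each statement's English description precedes it below -/
import Mathlib

section
/- Let R be a ring with a central invertible element q, and let X = (x_{ij}) be an n×n q-generic matrix over R. Then the quantum determinant det_q X commutes with every entry of X: (det_q X)·x_{kl} = x_{kl}·(det_q X) for all k, l. In particular det_q X is central in the subring generated by the entries of X. -/
/-!
The quantum determinant commutes with the entries because `X` has a two-sided quantum adjugate.
Put `c = (-q)⁻¹`, let `M_{ij}` be the quantum minor without row `i` and column `j`, and let
`S_{ji} = c ^ (j - i) M_{ij}`. Then `X * S = det • 1` and `S * X = det • 1`, so that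
`det * x_{kl} = (X * S * X)_{kl} = x_{kl} * det`.

The quantum minors live in the quantum exterior algebra, with generators `e_1, …, e_n`: the minor
with rows `i_1, …, i_m` and columns `T` is the coefficient of `e_T` in the product of the row
elements `ξ_i = ∑_j x_{ij} e_j` (`qMinor`). The quantum relations imply `ξ_i ξ_i = 0`
(`QRel.rowOp_self`) and `ξ_j ξ_i = c ξ_i ξ_j` for `i < j` (`QRel.rowOp_swap`). Hence a row put in
front of, or behind, an increasing list of rows can be moved to its place at the cost of a power
of `c`, and the minor vanishes if that row already occurs in the list.

Expanding along the first row then gives `X * S = det • 1` (`QRel.row_expansion`). Expanding along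
the last row for the transpose of `X`, which satisfies the same relations, gives `S * X = det • 1`
(`QRel.column_expansion`), provided the minors do not change under transposition
(`QRel.minor_transpose`); that follows by induction from expansions along the smallest row and
column. Finally `qMinor_univ` identifies the minor of full size with the sum over permutations.
-/

/-- The number of inversions (the "length" `ℓ`) of a tuple. -/
def tupleInv {m : ℕ} {α : Type*} [LinearOrder α] (f : Fin m → α) : ℕ :=
  ((Finset.univ : Finset (Fin m × Fin m)).filter fun p => p.1 < p.2 ∧ f p.2 < f p.1).card

/-- The quantum determinant `det_q A = ∑_σ (-q)^{-ℓ(σ)} a_{1,σ1} ⋯ a_{n,σn}`. -/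
def qdet {R : Type*} [Ring R] {n : ℕ} (q : Rˣ) (A : Matrix (Fin n) (Fin n) R) : R :=
  ∑ σ : Equiv.Perm (Fin n),
    (((-q) ^ (-(tupleInv fun i => σ i : ℤ)) : Rˣ) : R) * (List.ofFn fun i => A i (σ i)).prod

/-- A matrix is `q`-generic if its entries satisfy the standard quantum relations. -/
def qGeneric {R : Type*} [Ring R] {n m : ℕ} (q : Rˣ) (X : Matrix (Fin n) (Fin m) R) : Prop :=
  (∀ (k : Fin n) (i j : Fin m), i < j → X k j * X k i = (q : R) * (X k i * X k j)) ∧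
  (∀ (i j : Fin n) (k : Fin m), i < j → X j k * X i k = (q : R) * (X i k * X j k)) ∧
  (∀ (i j : Fin n) (k l : Fin m), i < j → k < l → X j k * X i l = X i l * X j k) ∧
  (∀ (i j : Fin n) (k l : Fin m), i < j → k < l →
    X j l * X i k = X i k * X j l + ((q : R) - ((q⁻¹ : Rˣ) : R)) * (X i l * X j k))

open Finset

section QuantumMinors

/-! ### Row operators and quantum minors -/

variable {Z R : Type*} [CommRing Z] [Ring R] [Algebra Z R] {n : ℕ}

/-- The consequences of the quantum relations used below, for the parameter `c = (-q)⁻¹` in a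
commutative ring of scalars `Z`. The first two say that any two rows of `X` satisfy the relations
`ξ_i ξ_i = 0` and `ξ_j ξ_i = c ξ_i ξ_j` for `i < j`, where `ξ_i = ∑_a x_{ia} e_a` and the `e_a` are
the generators of the quantum exterior algebra. -/
structure QRel (c : Z) (X : Matrix (Fin n) (Fin n) R) : Prop where
  same_row : ∀ (i a b : Fin n), a < b → X i a * X i b + c • (X i b * X i a) = 0
  two_rows : ∀ (i j a b : Fin n), i < j → a < b →
    X j a * X i b + c • (X j b * X i a) = c • (X i a * X j b + c • (X i b * X j a))
  comm : ∀ (i j a b : Fin n), i < j → a < b → X j a * X i b = X i b * X j a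

/-- Left multiplication by the `i`-th row `ξ_i = ∑_j x_{ij} e_j` on the quantum exterior algebra
over `R`. An element of that algebra is encoded by its coefficients in the basis `e_S`, `S` a set of
columns, hence as a function `Finset (Fin n) → R`; reordering `e_j e_{S \ j}` into `e_S` costs
a factor `c` for each `s ∈ S` with `s < j`. -/
def rowOp (c : Z) (X : Matrix (Fin n) (Fin n) R) (i : Fin n)
    (F : Finset (Fin n) → R) : Finset (Fin n) → R :=
  fun S => ∑ j ∈ S, c ^ #{s ∈ S | s < j} • (X i j * F (S.erase j))

/-- The quantum minor of `X` with the rows listed by `l` (in this order, repetitions allowed) and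
the set `S` of columns: the coefficient of `e_S` in the product of the rows `ξ_i`, `i ∈ l`. -/
def qMinor (c : Z) (X : Matrix (Fin n) (Fin n) R) : List (Fin n) → Finset (Fin n) → R
  | [] => fun S => if S = ∅ then 1 else 0
  | i :: l => rowOp c X i (qMinor c X l)

lemma rowOp_smul (c d : Z) (X : Matrix (Fin n) (Fin n) R) (i : Fin n)
    (F : Finset (Fin n) → R) : rowOp c X i (d • F) = d • rowOp c X i F := by
  funext S
  simp only [rowOp, Pi.smul_apply, mul_smul_comm, Finset.smul_sum]
  exact Finset.sum_congr rfl fun j _ => smul_comm _ _ _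

lemma rowOp_zero (c : Z) (X : Matrix (Fin n) (Fin n) R) (i : Fin n) :
    rowOp c X i 0 = 0 := by
  funext S
  simp [rowOp]

lemma card_lt_erase_of_lt {S : Finset (Fin n)} {a b : Fin n} (ha : a ∈ S) (hab : a < b) :
    #{s ∈ S | s < b} = #{s ∈ S.erase a | s < b} + 1 := by
  rw [Finset.filter_erase, Finset.card_erase_add_one]
  simp [ha, hab]

lemma card_lt_erase_of_gt {S : Finset (Fin n)} {a b : Fin n} (hab : b < a) :
    #{s ∈ S.erase a | s < b} = #{s ∈ S | s < b} := by
  rw [Finset.filter_erase, Finset.erase_eq_of_notMem]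
  simp [hab.le]

lemma card_gt_erase_of_gt {S : Finset (Fin n)} {a b : Fin n} (ha : a ∈ S) (hab : b < a) :
    #{s ∈ S | b < s} = #{s ∈ S.erase a | b < s} + 1 := by
  rw [Finset.filter_erase, Finset.card_erase_add_one]
  simp [ha, hab]

lemma card_gt_erase_of_lt {S : Finset (Fin n)} {a b : Fin n} (hab : a < b) :
    #{s ∈ S.erase a | b < s} = #{s ∈ S | b < s} := by
  rw [Finset.filter_erase, Finset.erase_eq_of_notMem]
  simp [hab.le]

/-- A sum over ordered pairs of distinct elements, grouped by unordered pairs. -/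
lemma sum_erase_eq_sum_lt (S : Finset (Fin n)) (g : Fin n → Fin n → R) :
    ∑ a ∈ S, ∑ b ∈ S.erase a, g a b = ∑ a ∈ S, ∑ b ∈ S with a < b, (g a b + g b a) := by
  have h1 : ∀ a ∈ S, ∑ b ∈ S.erase a, g a b =
      ∑ b ∈ S with a < b, g a b + ∑ b ∈ S with b < a, g a b := by
    intro a _
    rw [← Finset.sum_union]
    · apply Finset.sum_congr _ (fun _ _ => rfl)
      ext b
      simp only [mem_erase, mem_union, mem_filter]
      constructor
      · rintro ⟨h, hb⟩
        rcases lt_or_gt_of_ne h with h | h <;> simp [h, hb]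
      · rintro (⟨hb, h⟩ | ⟨hb, h⟩)
        · exact ⟨h.ne', hb⟩
        · exact ⟨h.ne, hb⟩
    · rw [Finset.disjoint_filter]
      intro b _ h h'
      exact lt_asymm h h'
  rw [Finset.sum_congr rfl h1, Finset.sum_add_distrib]
  simp only [Finset.sum_add_distrib]
  congr 1
  apply Finset.sum_comm'
  intro a b
  simp only [mem_filter]
  tauto

lemma rowOp_rowOp (c : Z) (X : Matrix (Fin n) (Fin n) R) (i j : Fin n)
    (F : Finset (Fin n) → R) (S : Finset (Fin n)) :
    rowOp c X j (rowOp c X i F) S = ∑ a ∈ S, ∑ b ∈ S with a < b,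
      c ^ (#{s ∈ S | s < a} + #{s ∈ S.erase a | s < b}) •
        ((X j a * X i b + c • (X j b * X i a)) * F ((S.erase a).erase b)) := by
  simp only [rowOp, Finset.mul_sum, Finset.smul_sum, mul_smul_comm, smul_smul, ← pow_add]
  rw [sum_erase_eq_sum_lt]
  refine Finset.sum_congr rfl fun a ha => Finset.sum_congr rfl fun b hb => ?_
  rw [Finset.mem_filter] at hb
  rw [card_lt_erase_of_gt hb.2, card_lt_erase_of_lt ha hb.2,
    Finset.erase_right_comm (a := b) (b := a), add_mul, smul_add, smul_mul_assoc, smul_smul,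
    ← pow_succ, ← mul_assoc, ← mul_assoc]
  congr 3
  omega

variable {c : Z} {X : Matrix (Fin n) (Fin n) R}

lemma QRel.rowOp_self (h : QRel c X) (i : Fin n) (F : Finset (Fin n) → R) :
    rowOp c X i (rowOp c X i F) = 0 := by
  funext S
  rw [rowOp_rowOp]
  refine Finset.sum_eq_zero fun a _ => Finset.sum_eq_zero fun b hb => ?_
  rw [h.same_row i a b (Finset.mem_filter.1 hb).2, zero_mul, smul_zero]

lemma QRel.rowOp_swap (h : QRel c X) {i j : Fin n} (hij : i < j) (F : Finset (Fin n) → R) :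
    rowOp c X j (rowOp c X i F) = c • rowOp c X i (rowOp c X j F) := by
  funext S
  rw [Pi.smul_apply, rowOp_rowOp, rowOp_rowOp, Finset.smul_sum]
  refine Finset.sum_congr rfl fun a _ => ?_
  rw [Finset.smul_sum]
  refine Finset.sum_congr rfl fun b hb => ?_
  rw [h.two_rows i j a b hij (Finset.mem_filter.1 hb).2, smul_mul_assoc, smul_comm]

/-! ### Moving a row through a sorted list of rows -/

lemma sort_insert_lt {a : Fin n} {s : Finset (Fin n)} (h : ∀ x ∈ s, a < x) :
    (insert a s).sort (· ≤ ·) = a :: s.sort (· ≤ ·) :=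
  Finset.sort_insert _ (fun b hb => (h b hb).le) fun ha => lt_irrefl _ (h a ha)

lemma QRel.minor_cons_erase (h : QRel c X) (S : Finset (Fin n)) (i : Fin n) (hi : i ∈ S) :
    qMinor c X (i :: (S.erase i).sort (· ≤ ·)) =
      c ^ #{s ∈ S | s < i} • qMinor c X (S.sort (· ≤ ·)) := by
  induction S using Finset.induction_on_min with
  | empty => simp at hi
  | insert a s ha ih =>
    have has : a ∉ s := fun h => lt_irrefl _ (ha a h)
    rcases Finset.mem_insert.1 hi with rfl | his
    · have : #{x ∈ insert i s | x < i} = 0 := by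
        rw [Finset.card_eq_zero, Finset.filter_eq_empty_iff]
        intro x hx
        rcases Finset.mem_insert.1 hx with rfl | hx
        · exact lt_irrefl _
        · exact (ha x hx).not_gt
      rw [this, Finset.erase_insert has, sort_insert_lt ha, pow_zero, one_smul]
    · have hai := ha i his
      have hcard := card_lt_erase_of_lt (Finset.mem_insert_self a s) hai
      rw [Finset.erase_insert has] at hcard
      rw [Finset.erase_insert_of_ne hai.ne, sort_insert_lt ha,
        sort_insert_lt fun x hx => ha x (Finset.mem_of_mem_erase hx), hcard]
      specialize ih his
      simp only [qMinor] at ih ⊢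
      rw [h.rowOp_swap hai, ih, rowOp_smul, smul_smul, pow_succ']

lemma QRel.minor_cons_mem (h : QRel c X) (S : Finset (Fin n)) (k : Fin n) (hk : k ∈ S) :
    qMinor c X (k :: S.sort (· ≤ ·)) = 0 := by
  induction S using Finset.induction_on_min with
  | empty => simp at hk
  | insert a s ha ih =>
    rw [sort_insert_lt ha]
    rcases Finset.mem_insert.1 hk with rfl | hks
    · exact h.rowOp_self _ _
    · specialize ih hks
      simp only [qMinor] at ih ⊢
      rw [h.rowOp_swap (ha k hks), ih, rowOp_zero, smul_zero]

lemma QRel.minor_append_singleton (h : QRel c X) (a : Fin n) (l : List (Fin n))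
    (hl : ∀ x ∈ l, a < x) : qMinor c X (l ++ [a]) = c ^ l.length • qMinor c X (a :: l) := by
  induction l with
  | nil => simp
  | cons b t ih =>
    specialize ih fun x hx => hl x (List.mem_cons_of_mem _ hx)
    simp only [List.cons_append, qMinor, List.length_cons] at ih ⊢
    rw [ih, rowOp_smul, h.rowOp_swap (hl b List.mem_cons_self), smul_smul, pow_succ]

lemma QRel.minor_erase_append (h : QRel c X) (S : Finset (Fin n)) (i : Fin n) (hi : i ∈ S) :
    qMinor c X ((S.erase i).sort (· ≤ ·) ++ [i]) =
      c ^ #{s ∈ S | i < s} • qMinor c X (S.sort (· ≤ ·)) := by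
  induction S using Finset.induction_on_min with
  | empty => simp at hi
  | insert a s ha ih =>
    have has : a ∉ s := fun h => lt_irrefl _ (ha a h)
    rcases Finset.mem_insert.1 hi with rfl | his
    · have : {x ∈ insert i s | i < x} = s := by
        rw [Finset.filter_insert, if_neg (lt_irrefl _), Finset.filter_true_of_mem ha]
      rw [this, Finset.erase_insert has, sort_insert_lt ha, h.minor_append_singleton,
        Finset.length_sort]
      simpa using ha
    · have hai := ha i his
      have hcard := card_gt_erase_of_lt (S := insert a s) hai
      rw [Finset.erase_insert has] at hcard
      rw [Finset.erase_insert_of_ne hai.ne, sort_insert_lt ha,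
        sort_insert_lt fun x hx => ha x (Finset.mem_of_mem_erase hx), ← hcard]
      specialize ih his
      simp only [qMinor, List.cons_append] at ih ⊢
      rw [ih, rowOp_smul]

lemma QRel.minor_append_mem (h : QRel c X) (S : Finset (Fin n)) (k : Fin n) (hk : k ∈ S) :
    qMinor c X (S.sort (· ≤ ·) ++ [k]) = 0 := by
  induction S using Finset.induction_on_min with
  | empty => simp at hk
  | insert a s ha ih =>
    rw [sort_insert_lt ha]
    rcases Finset.mem_insert.1 hk with rfl | hks
    · simp only [qMinor, List.cons_append]
      rw [h.minor_append_singleton _ _ (by simpa using ha), rowOp_smul]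
      simp only [qMinor]
      rw [h.rowOp_self, smul_zero]
    · simp only [qMinor, List.cons_append]
      rw [ih hks, rowOp_zero]

/-- Laplace expansion along the last row of the list, with the entries of that row on the right. The
definition of `qMinor` expands along the first row; the two expansions are compatible because left
and right multiplication in the exterior algebra commute. -/
lemma qMinor_append_apply (c : Z) (X : Matrix (Fin n) (Fin n) R) (l : List (Fin n)) (k : Fin n)
    (S : Finset (Fin n)) : qMinor c X (l ++ [k]) S =
      ∑ j ∈ S, c ^ #{s ∈ S | j < s} • (qMinor c X l (S.erase j) * X k j) := by
  induction l generalizing S with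
  | nil =>
    simp only [List.nil_append, qMinor, rowOp]
    refine Finset.sum_congr rfl fun j hj => ?_
    by_cases hS : S.erase j = ∅
    · have hs : ∀ s ∈ S, s = j := fun s hs => by
        by_contra hne
        have : s ∈ S.erase j := Finset.mem_erase.2 ⟨hne, hs⟩
        simp [hS] at this
      rw [Finset.filter_false_of_mem (fun s hs' => (hs s hs').symm ▸ lt_irrefl _),
        Finset.filter_false_of_mem (fun s hs' => (hs s hs').symm ▸ lt_irrefl _)]
      simp [hS]
    · simp [hS]
  | cons i l ih =>
    simp only [List.cons_append, qMinor, rowOp, ih, Finset.mul_sum, Finset.sum_mul,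
      Finset.smul_sum, mul_smul_comm, smul_mul_assoc, smul_smul, ← pow_add]
    rw [Finset.sum_comm' (s' := fun b => S.erase b) (t' := S)]
    · refine Finset.sum_congr rfl fun b hb => Finset.sum_congr rfl fun a ha => ?_
      rw [Finset.mem_erase] at ha
      rw [Finset.erase_right_comm (a := a) (b := b), mul_assoc]
      congr 2
      rcases lt_or_gt_of_ne ha.1 with hab | hab
      · rw [card_gt_erase_of_lt hab, card_lt_erase_of_gt hab, add_comm]
      · rw [card_gt_erase_of_gt ha.2 hab, card_lt_erase_of_lt hb hab]
        omega
    · intro a b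
      simp only [mem_erase]
      tauto

/-! ### Invariance under transposition -/

lemma qMinor_sort_empty (c : Z) (X : Matrix (Fin n) (Fin n) R) (S : Finset (Fin n)) :
    qMinor c X (S.sort (· ≤ ·)) ∅ = if S = ∅ then 1 else 0 := by
  induction S using Finset.induction_on_min with
  | empty => simp [qMinor]
  | insert a s ha _ =>
    rw [sort_insert_lt ha]
    simp [qMinor, rowOp]

lemma exists_insert_min {S : Finset (Fin n)} (hS : S.Nonempty) :
    ∃ a s, (∀ x ∈ s, a < x) ∧ S = insert a s :=
  ⟨S.min' hS, S.erase (S.min' hS), fun _ hx => S.min'_lt_of_mem_erase_min' hS hx,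
    (Finset.insert_erase (S.min'_mem hS)).symm⟩

lemma qMinor_insert_insert (c : Z) (X : Matrix (Fin n) (Fin n) R) {a b : Fin n}
    {s t : Finset (Fin n)} (ha : ∀ x ∈ s, a < x) (hb : ∀ x ∈ t, b < x) :
    qMinor c X ((insert a s).sort (· ≤ ·)) (insert b t) =
      X a b * qMinor c X (s.sort (· ≤ ·)) t +
      ∑ j ∈ t, c ^ (#{x ∈ t | x < j} + 1) •
        (X a j * qMinor c X (s.sort (· ≤ ·)) (insert b (t.erase j))) := by
  have hbt : b ∉ t := fun h => lt_irrefl _ (hb b h)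
  rw [sort_insert_lt ha]
  simp only [qMinor, rowOp]
  rw [Finset.sum_insert hbt, Finset.erase_insert hbt]
  congr 1
  · rw [Finset.filter_false_of_mem]
    · simp
    · intro x hx
      rcases Finset.mem_insert.1 hx with rfl | hx
      · exact lt_irrefl _
      · exact (hb x hx).not_gt
  · refine Finset.sum_congr rfl fun j hj => ?_
    rw [card_lt_erase_of_lt (Finset.mem_insert_self b t) (hb j hj), Finset.erase_insert hbt,
      Finset.erase_insert_of_ne (hb j hj).ne]

/-- Quantum minors of `X` and of its transpose agree. Expanding along the smallest row `a` and then
along the smallest column `b`, or in the opposite order, gives the same terms up to the order of the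
factors `x_{aj}` and `x_{ib}` with `a < i` and `b < j`, and these commute. -/
lemma QRel.minor_transpose (h : QRel c X) (S T : Finset (Fin n)) :
    qMinor c X (S.sort (· ≤ ·)) T = qMinor c X.transpose (T.sort (· ≤ ·)) S := by
  induction hm : #S using Nat.strong_induction_on generalizing S T with
  | _ m ih =>
  rcases S.eq_empty_or_nonempty with rfl | hS
  · rw [qMinor_sort_empty]; simp [qMinor]
  rcases T.eq_empty_or_nonempty with rfl | hT
  · rw [qMinor_sort_empty]; simp [qMinor]
  obtain ⟨a, s, ha, rfl⟩ := exists_insert_min hS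
  obtain ⟨b, t, hb, rfl⟩ := exists_insert_min hT
  have has : a ∉ s := fun h => lt_irrefl _ (ha a h)
  rw [Finset.card_insert_of_notMem has] at hm
  rw [qMinor_insert_insert c X ha hb, qMinor_insert_insert c X.transpose hb ha,
    ih #s (by omega) s t rfl, Matrix.transpose_apply]
  congr 1
  have hL : ∀ j ∈ t, qMinor c X (s.sort (· ≤ ·)) (insert b (t.erase j)) =
      ∑ i ∈ s, c ^ #{x ∈ s | x < i} •
        (X i b * qMinor c X ((s.erase i).sort (· ≤ ·)) (t.erase j)) := by
    intro j hj
    rw [ih #s (by omega) s _ rfl,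
      sort_insert_lt fun x hx => hb x (Finset.mem_of_mem_erase hx)]
    simp only [qMinor, rowOp]
    refine Finset.sum_congr rfl fun i hi => ?_
    rw [ih #(s.erase i) (by have := Finset.card_erase_lt_of_mem hi; omega) _ _ rfl,
      Matrix.transpose_apply]
  have hR : ∀ i ∈ s, qMinor c X.transpose (t.sort (· ≤ ·)) (insert a (s.erase i)) =
      ∑ j ∈ t, c ^ #{x ∈ t | x < j} •
        (X a j * qMinor c X ((s.erase i).sort (· ≤ ·)) (t.erase j)) := by
    intro i hi
    have hcard : #(insert a (s.erase i)) = #s := by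
      rw [Finset.card_insert_of_notMem (fun h => has (Finset.mem_of_mem_erase h)),
        Finset.card_erase_add_one hi]
    rw [← ih #s (by omega) _ _ hcard,
      sort_insert_lt fun x hx => ha x (Finset.mem_of_mem_erase hx)]
    simp only [qMinor, rowOp]
  rw [Finset.sum_congr rfl fun j hj => by rw [hL j hj],
    Finset.sum_congr (s₁ := s) rfl fun i hi => by rw [hR i hi]]
  simp only [Finset.mul_sum, Finset.smul_sum, mul_smul_comm, smul_smul]
  rw [Finset.sum_comm]
  refine Finset.sum_congr rfl fun i hi => Finset.sum_congr rfl fun j hj => ?_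
  rw [Matrix.transpose_apply, ← mul_assoc, ← mul_assoc, h.comm a i b j (ha i hi) (hb j hj)]
  congr 1
  ring

/-! ### The quantum adjugate and centrality -/

/-- The matrix identity `X * S = det • 1`, where `S` is the quantum adjugate, with denominators
(negative powers of `c`) cleared: inserting row `k` in front of the rows other than `i` either
repeats a row or gives the determinant up to a power of `c`. -/
lemma QRel.row_expansion (h : QRel c X) (k i : Fin n) :
    ∑ j, c ^ #{s | s < j} •
      (X k j * qMinor c X ((univ.erase i).sort (· ≤ ·)) (univ.erase j)) =
    if k = i then c ^ #{s | s < i} • qMinor c X (univ.sort (· ≤ ·)) univ else 0 := by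
  change qMinor c X (k :: (univ.erase i).sort (· ≤ ·)) univ = _
  split_ifs with hki
  · rw [hki, h.minor_cons_erase univ i (Finset.mem_univ i), Pi.smul_apply]
  · rw [h.minor_cons_mem _ _ (by simpa using hki), Pi.zero_apply]

/-- The matrix identity `S * X = det • 1` for the same quantum adjugate `S` as in
`QRel.row_expansion`, with denominators cleared. It is the expansion along the last row for the
transpose of `X`. -/
lemma QRel.column_expansion (h : QRel c X) (h' : QRel c X.transpose) (k i : Fin n) :
    ∑ j, c ^ #{s | j < s} •
      (qMinor c X ((univ.erase j).sort (· ≤ ·)) (univ.erase i) * X j k) =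
    if k = i then c ^ #{s | i < s} • qMinor c X (univ.sort (· ≤ ·)) univ else 0 := by
  simp only [h.minor_transpose]
  have := qMinor_append_apply c X.transpose ((univ.erase i).sort (· ≤ ·)) k univ
  simp only [Matrix.transpose_apply] at this
  rw [← this]
  split_ifs with hki
  · rw [hki, h'.minor_erase_append univ i (Finset.mem_univ i), Pi.smul_apply]
  · rw [h'.minor_append_mem _ _ (by simpa using hki), Pi.zero_apply]

/-- Evaluating `X * S * X` in two ways, where `S` is the quantum adjugate. -/
lemma QRel.minor_univ_comm (h : QRel c X) (h' : QRel c X.transpose) (hc : IsUnit c)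
    (k l : Fin n) : qMinor c X (univ.sort (· ≤ ·)) univ * X k l =
      X k l * qMinor c X (univ.sort (· ≤ ·)) univ := by
  have key : ∑ i, ∑ j, (c ^ #{s | s < j} * c ^ #{s | i < s}) •
        (X k j * qMinor c X ((univ.erase i).sort (· ≤ ·)) (univ.erase j) * X i l) =
      ∑ j, ∑ i, (c ^ #{s | s < j} * c ^ #{s | i < s}) •
        (X k j * qMinor c X ((univ.erase i).sort (· ≤ ·)) (univ.erase j) * X i l) :=
    Finset.sum_comm
  have hL : ∀ i, ∑ j, (c ^ #{s | s < j} * c ^ #{s | i < s}) •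
        (X k j * qMinor c X ((univ.erase i).sort (· ≤ ·)) (univ.erase j) * X i l) =
      c ^ #{s | i < s} • ((if k = i then c ^ #{s | s < i} •
        qMinor c X (univ.sort (· ≤ ·)) univ else 0) * X i l) := by
    intro i
    rw [← h.row_expansion, Finset.sum_mul, Finset.smul_sum]
    refine Finset.sum_congr rfl fun j _ => ?_
    rw [smul_mul_assoc, smul_smul, mul_comm]
  have hR : ∀ j, ∑ i, (c ^ #{s | s < j} * c ^ #{s | i < s}) •
        (X k j * qMinor c X ((univ.erase i).sort (· ≤ ·)) (univ.erase j) * X i l) =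
      c ^ #{s | s < j} • (X k j * (if l = j then c ^ #{s | j < s} •
        qMinor c X (univ.sort (· ≤ ·)) univ else 0)) := by
    intro j
    rw [← h.column_expansion h', Finset.mul_sum, Finset.smul_sum]
    refine Finset.sum_congr rfl fun i _ => ?_
    rw [mul_smul_comm, smul_smul, mul_assoc]
  have hcard : ∀ j : Fin n, #{s | s < j} + #{s | j < s} = n - 1 := by
    intro j
    rw [Finset.filter_gt_eq_Iio, Finset.filter_lt_eq_Ioi, Fin.card_Iio, Fin.card_Ioi]
    omega
  rw [Finset.sum_congr rfl fun i _ => hL i, Finset.sum_congr rfl fun j _ => hR j] at key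
  simp only [ite_mul, mul_ite, zero_mul, mul_zero, smul_ite, smul_zero,
    Finset.sum_ite_eq, Finset.mem_univ, if_true, smul_mul_assoc, mul_smul_comm, smul_smul,
    ← pow_add] at key
  rw [add_comm, hcard, hcard] at key
  exact (hc.pow (n - 1)).smul_left_cancel.1 key

/-! ### Comparison with the sum over permutations -/

lemma tupleInv_cons {m : ℕ} (j : Fin n) (g : Fin m → Fin n) :
    tupleInv (Fin.cons j g : Fin (m + 1) → Fin n) = #{i | g i < j} + tupleInv g := by
  unfold tupleInv
  simp only [Finset.card_filter, Fintype.sum_prod_type, Fin.sum_univ_succ, Fin.cons_zero,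
    Fin.cons_succ, Fin.succ_pos, Fin.succ_lt_succ_iff, Fin.not_lt_zero, true_and,
    false_and, if_false, zero_add]

/-- The explicit formula for quantum minors, as a sum over enumerations `f` of the column set. -/
lemma qMinor_ofFn (c : Z) (X : Matrix (Fin n) (Fin n) R) {m : ℕ} (r : Fin m → Fin n)
    (S : Finset (Fin n)) :
    qMinor c X (List.ofFn r) S =
      ∑ f : Fin m → Fin n, if Function.Injective f ∧ univ.image f = S then
        c ^ tupleInv f • (List.ofFn fun i => X (r i) (f i)).prod else 0 := by
  classical
  induction m generalizing S with
  | zero =>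
    simp [qMinor, Function.injective_of_subsingleton, tupleInv, eq_comm]
  | succ m ih =>
    rw [List.ofFn_succ]
    simp only [qMinor, rowOp, ih]
    rw [← (Fin.consEquiv fun _ => Fin n).sum_comp, Fintype.sum_prod_type,
      ← Finset.sum_subset (Finset.subset_univ S)]
    · refine Finset.sum_congr rfl fun j hj => ?_
      rw [Finset.mul_sum, Finset.smul_sum]
      refine Finset.sum_congr rfl fun g _ => ?_
      have hiff : (Function.Injective (Fin.cons j g : Fin (m + 1) → Fin n) ∧
          univ.image (Fin.cons j g : Fin (m + 1) → Fin n) = S) ↔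
          (Function.Injective g ∧ univ.image g = S.erase j) := by
        have himg : univ.image (Fin.cons j g : Fin (m + 1) → Fin n) =
            insert j (univ.image g) := by
          ext x
          simp [Fin.exists_fin_succ, eq_comm]
        rw [Fin.cons_injective_iff, himg]
        constructor
        · rintro ⟨⟨hjg, hg⟩, rfl⟩
          refine ⟨hg, ?_⟩
          rw [Finset.erase_insert (by simpa using hjg)]
        · rintro ⟨hg, hS⟩
          refine ⟨⟨?_, hg⟩, ?_⟩
          · rintro ⟨i, rfl⟩
            have : g i ∈ univ.image g := by simp
            simp [hS] at this
          · rw [hS, Finset.insert_erase hj]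
      change _ = if Function.Injective (Fin.cons j g : Fin (m + 1) → Fin n) ∧
          univ.image (Fin.cons j g : Fin (m + 1) → Fin n) = S then
        c ^ tupleInv (Fin.cons j g : Fin (m + 1) → Fin n) •
          (List.ofFn fun i => X (r i) ((Fin.cons j g : Fin (m + 1) → Fin n) i)).prod else 0
      rw [if_congr hiff rfl rfl]
      split_ifs with hg
      -- As `g` enumerates `S \ j`, the inversions involving the first entry count the `s < j` in `S`.
      · have hcard : #{s ∈ S | s < j} = #{i | g i < j} := by
          rw [← Finset.card_image_of_injective _ hg.1]
          congr 1
          ext x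
          have hx : x ∈ univ.image g ↔ x ∈ S.erase j := by rw [hg.2]
          simp only [mem_image, mem_univ, true_and, mem_erase, mem_filter] at hx ⊢
          constructor
          · rintro ⟨h1, h2⟩
            obtain ⟨i, rfl⟩ := hx.2 ⟨h2.ne, h1⟩
            exact ⟨i, h2, rfl⟩
          · rintro ⟨i, h1, rfl⟩
            exact ⟨(hx.1 ⟨i, rfl⟩).2, h1⟩
        rw [hcard, tupleInv_cons, mul_smul_comm, smul_smul, ← pow_add, List.ofFn_succ]
        simp
      · simp
    · intro j _ hj
      refine Finset.sum_eq_zero fun g _ => if_neg ?_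
      rintro ⟨_, hS⟩
      apply hj
      rw [← hS]
      simp only [Fin.consEquiv_apply, mem_image, mem_univ, true_and]
      exact ⟨0, rfl⟩

lemma qMinor_univ (c : Z) (X : Matrix (Fin n) (Fin n) R) :
    qMinor c X (univ.sort (· ≤ ·)) univ =
      ∑ σ : Equiv.Perm (Fin n), c ^ tupleInv (fun i => σ i) •
        (List.ofFn fun i => X i (σ i)).prod := by
  rw [Fin.sort_univ, show List.finRange n = List.ofFn fun i => i from rfl, qMinor_ofFn, ← Finset.sum_filter]
  symm
  refine Finset.sum_bij (fun σ _ => (σ : Fin n → Fin n)) ?_ ?_ ?_ ?_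
  · intro σ _
    simp [σ.injective]
  · intro σ _ τ _ h
    exact DFunLike.coe_injective h
  · intro f hf
    have hf := (Finset.mem_filter.1 hf).2.1
    exact ⟨Equiv.ofBijective f (Finite.injective_iff_bijective.1 hf), Finset.mem_univ _, rfl⟩
  · intro σ _
    rfl

lemma QRel.of_relations (q : Zˣ) (X : Matrix (Fin n) (Fin n) R)
    (h1 : ∀ k i j : Fin n, i < j → X k j * X k i = (q : Z) • (X k i * X k j))
    (h3 : ∀ i j k l : Fin n, i < j → k < l → X j k * X i l = X i l * X j k)
    (h4 : ∀ i j k l : Fin n, i < j → k < l →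
      X j l * X i k = X i k * X j l + ((q : Z) - ((q⁻¹ : Zˣ) : Z)) • (X i l * X j k)) :
    QRel (((-q)⁻¹ : Zˣ) : Z) X where
  same_row i a b hab := by
    rw [h1 i a b hab, smul_smul]
    simp
  two_rows i j a b hij hab := by
    rw [h4 i j a b hij hab, h3 i j a b hij hab]
    have hq : (q : Z) * ((q⁻¹ : Zˣ) : Z) = 1 := q.mul_inv
    have hinv : (((-q)⁻¹ : Zˣ) : Z) = -((q⁻¹ : Zˣ) : Z) := by simp
    rw [hinv]
    generalize ((q⁻¹ : Zˣ) : Z) = p at *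
    simp only [smul_add, smul_smul]
    rw [show -p * ((q : Z) - p) = -1 + p * p by linear_combination -hq]
    module
  comm i j a b hij hab := h3 i j a b hij hab

end QuantumMinors

/-- The quantum determinant of a `q`-generic matrix commutes with every
entry of the matrix; in particular it is central in the subring generated by the entries. -/
theorem stmt1 {R : Type*} [Ring R] (q : Rˣ) (hq : ∀ r : R, (q : R) * r = r * (q : R))
    {n : ℕ} (X : Matrix (Fin n) (Fin n) R) (hX : qGeneric q X) :
    (∀ k l : Fin n, qdet q X * X k l = X k l * qdet q X) ∧
    (∀ y ∈ Subring.closure {x : R | ∃ k l : Fin n, X k l = x},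
      qdet q X * y = y * qdet q X) := by
  have hmain : ∀ k l : Fin n, qdet q X * X k l = X k l * qdet q X := by
    -- The center serves as the ring of scalars; it contains `q` and its inverse.
    let _ : Algebra (Subring.center R) R :=
      (Subring.center R).subtype.toAlgebra' fun z r => (Subring.mem_center_iff.1 z.2 r).symm
    have hsmul : ∀ (z : Subring.center R) (r : R), z • r = (z : R) * r := fun _ _ => rfl
    have hqi : ∀ r : R, ((q⁻¹ : Rˣ) : R) * r = r * ((q⁻¹ : Rˣ) : R) := fun r => by
      rw [Units.inv_mul_eq_iff_eq_mul, ← mul_assoc, hq, mul_assoc, Units.mul_inv, mul_one]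
    let Q : (Subring.center R)ˣ :=
      { val := ⟨q, Subring.mem_center_iff.2 fun r => (hq r).symm⟩
        inv := ⟨(q⁻¹ : Rˣ), Subring.mem_center_iff.2 fun r => (hqi r).symm⟩
        val_inv := Subtype.ext q.mul_inv
        inv_val := Subtype.ext q.inv_mul }
    obtain ⟨h1, h2, h3, h4⟩ := hX
    have hrel : QRel (((-Q)⁻¹ : (Subring.center R)ˣ) : Subring.center R) X :=
      QRel.of_relations Q X h1 h3 h4
    have hrel' : QRel (((-Q)⁻¹ : (Subring.center R)ˣ) : Subring.center R) X.transpose := by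
      refine QRel.of_relations Q X.transpose (fun k i j hij => h2 i j k hij)
        (fun i j k l hij hkl => (h3 k l i j hkl hij).symm) fun i j k l hij hkl => ?_
      simp only [Matrix.transpose_apply]
      rw [h4 k l i j hkl hij, ← h3 k l i j hkl hij]
      rfl
    have hdet : qdet q X =
        qMinor (((-Q)⁻¹ : (Subring.center R)ˣ) : Subring.center R) X (univ.sort (· ≤ ·)) univ := by
      rw [qMinor_univ]
      refine Finset.sum_congr rfl fun σ _ => ?_
      rw [hsmul, zpow_neg, zpow_natCast, ← inv_pow]
      have hval : ((((-Q)⁻¹ : (Subring.center R)ˣ) : Subring.center R) : R) =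
          (((-q)⁻¹ : Rˣ) : R) := by
        rw [inv_neg, inv_neg]
        rfl
      rw [Subring.coe_pow, hval, Units.val_pow_eq_pow_val]
    intro k l
    rw [hdet]
    exact hrel.minor_univ_comm hrel' (Units.isUnit _) k l
  refine ⟨hmain, fun y hy => ?_⟩
  have hle : Subring.closure {x : R | ∃ k l : Fin n, X k l = x} ≤
      Subring.centralizer {qdet q X} := by
    rw [Subring.closure_le]
    rintro _ ⟨k, l, rfl⟩
    rw [SetLike.mem_coe, Subring.mem_centralizer_iff]
    rintro _ rfl
    exact hmain k l
  exact Subring.mem_centralizer_iff.1 (hle hy) _ rfl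
end

section
/- Let R be a ring with a central invertible element q. Let X be an n×n q-generic matrix over R and Y an n×m q-generic matrix over R, and suppose every entry of X commutes with every entry of Y. Then the product matrix X·Y is again q-generic. -/
/-- Two double sums agree if their diagonal terms agree and their terms agree after adding up
transposed positions. No division by `2` is involved, so this holds in every characteristic. -/
lemma sum_sum_eq_of_pairs {M : Type*} [AddCommGroup M] {n : ℕ} (f g : Fin n → Fin n → M)
    (hdiag : ∀ a, f a a = g a a)
    (hpair : ∀ a b, a < b → f a b + f b a = g a b + g b a) :
    ∑ a, ∑ b, f a b = ∑ a, ∑ b, g a b := by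
  rw [← sub_eq_zero, ← Finset.sum_sub_distrib]
  simp_rw [← Finset.sum_sub_distrib]
  rw [← Fintype.sum_prod_type' (f := fun a b => f a b - g a b)]
  refine Finset.sum_involution (fun p _ => p.swap) ?_ ?_ (fun _ _ => Finset.mem_univ _)
    (fun _ _ => Prod.swap_swap _)
  · rintro ⟨a, b⟩ -
    have key : f a b + f b a = g a b + g b a := by
      rcases lt_trichotomy a b with h | rfl | h
      · exact hpair a b h
      · rw [hdiag]
      · rw [add_comm, hpair b a h, add_comm]
    simp only [Prod.swap]
    rw [sub_add_sub_comm, key, sub_self]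
  · rintro ⟨a, b⟩ - hne heq
    have hba : b = a := congrArg Prod.fst heq
    subst hba
    exact hne (by simp [hdiag])

/-- The four relations of `qGeneric` for coefficients in a commutative ring `S` acting on `R`,
with `Q` and `P` in the roles of `q` and `q⁻¹`. -/
def smulGeneric {S R : Type*} [CommRing S] [Ring R] [Algebra S R] {n m : ℕ} (Q P : S)
    (X : Matrix (Fin n) (Fin m) R) : Prop :=
  (∀ (k : Fin n) (i j : Fin m), i < j → X k j * X k i = Q • (X k i * X k j)) ∧
  (∀ (i j : Fin n) (k : Fin m), i < j → X j k * X i k = Q • (X i k * X j k)) ∧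
  (∀ (i j : Fin n) (k l : Fin m), i < j → k < l → X j k * X i l = X i l * X j k) ∧
  (∀ (i j : Fin n) (k l : Fin m), i < j → k < l →
    X j l * X i k = X i k * X j l + (Q - P) • (X i l * X j k))

lemma smulGeneric_mul {S R : Type*} [CommRing S] [Ring R] [Algebra S R] {n m : ℕ} (Q P : S)
    (hQP : Q * P = 1) (X : Matrix (Fin n) (Fin n) R) (Y : Matrix (Fin n) (Fin m) R)
    (hX : smulGeneric Q P X) (hY : smulGeneric Q P Y)
    (hcomm : ∀ (i j : Fin n) (k : Fin n) (l : Fin m), X i j * Y k l = Y k l * X i j) :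
    smulGeneric Q P (X * Y) := by
  obtain ⟨xrow, xcol, xanti, xdiag⟩ := hX
  obtain ⟨yrow, ycol, yanti, ydiag⟩ := hY
  have expand : ∀ (r t : Fin n) (s u : Fin m), (X * Y) r s * (X * Y) t u =
      ∑ a, ∑ b, (X r a * X t b) * (Y a s * Y b u) := by
    intro r t s u
    simp only [Matrix.mul_apply, Finset.sum_mul_sum]
    refine Finset.sum_congr rfl fun a _ => Finset.sum_congr rfl fun b _ => ?_
    rw [mul_assoc, ← mul_assoc (Y a s), ← hcomm, mul_assoc, mul_assoc]
  refine ⟨?_, ?_, ?_, ?_⟩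
  · intro k i j hij
    simp only [expand, Finset.smul_sum]
    apply sum_sum_eq_of_pairs
    · intro a
      rw [yrow a i j hij, mul_smul_comm]
    · intro a b hab
      rw [xrow k a b hab, ydiag a b i j hab hij, yanti a b i j hab hij]
      simp only [mul_add, smul_mul_assoc, mul_smul_comm]
      linear_combination (norm := module) (-hQP) • ((X k a * X k b) * (Y a j * Y b i))
  · intro i j k hij
    simp only [expand, Finset.smul_sum]
    apply sum_sum_eq_of_pairs
    · intro a
      rw [xcol i j a hij, smul_mul_assoc]
    · intro a b hab
      rw [ycol a b k hab, xdiag i j a b hij hab, xanti i j a b hij hab]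
      simp only [add_mul, smul_mul_assoc, mul_smul_comm]
      linear_combination (norm := module) (-hQP) • ((X i b * X j a) * (Y a k * Y b k))
  · intro i j k l hij hkl
    simp only [expand]
    apply sum_sum_eq_of_pairs
    · intro a
      rw [xcol i j a hij, yrow a k l hkl, smul_mul_assoc, mul_smul_comm]
    · intro a b hab
      rw [xdiag i j a b hij hab, xanti i j a b hij hab, ydiag a b k l hab hkl,
        yanti a b k l hab hkl]
      simp only [add_mul, mul_add, smul_mul_assoc, mul_smul_comm]
      module
  · intro i j k l hij hkl
    simp only [expand, Finset.smul_sum, ← Finset.sum_add_distrib]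
    apply sum_sum_eq_of_pairs
    · intro a
      rw [xcol i j a hij, yrow a k l hkl]
      simp only [smul_mul_assoc, mul_smul_comm]
      linear_combination (norm := module) hQP • ((X i a * X j a) * (Y a k * Y a l))
    · intro a b hab
      rw [xdiag i j a b hij hab, xanti i j a b hij hab, ydiag a b k l hab hkl,
        yanti a b k l hab hkl]
      simp only [add_mul, mul_add, smul_mul_assoc, mul_smul_comm]
      module

/-- The product of an `n×n` and an `n×m` `q`-generic matrix whose entries
mutually commute is again `q`-generic. -/
theorem stmt2 {R : Type*} [Ring R] (q : Rˣ) (hq : ∀ r : R, (q : R) * r = r * (q : R))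
    {n m : ℕ} (X : Matrix (Fin n) (Fin n) R) (Y : Matrix (Fin n) (Fin m) R)
    (hX : qGeneric q X) (hY : qGeneric q Y)
    (hcomm : ∀ (i j : Fin n) (k : Fin n) (l : Fin m), X i j * Y k l = Y k l * X i j) :
    qGeneric q (X * Y) := by
  have hqc : (q : R) ∈ Subring.center R := Subring.mem_center_iff.2 fun r => (hq r).symm
  have hpc : ((q⁻¹ : Rˣ) : R) ∈ Subring.center R :=
    Subring.mem_center_iff.2 fun r => ((show Commute (q : R) r from hq r).units_inv_left).symm
  -- Scalars of the center act by left multiplication, so both notions unfold to the same thing.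
  exact smulGeneric_mul (S := Subring.center R) ⟨q, hqc⟩ ⟨_, hpc⟩ (Subtype.ext q.mul_inv)
    X Y hX hY hcomm
end

section
/- Let R be a ring with a central invertible element q. Let X and Y be n×n q-generic matrices over R such that every entry of X commutes with every entry of Y. Then the quantum determinant is multiplicative on the product: det_q(X·Y) = (det_q X)·(det_q Y). -/
namespace QDet

/-! ### Inversions and adjacent transpositions -/

section Inversions

variable {n : ℕ} {i i' : Fin n}

lemma swap_lt_swap (hi : (i' : ℕ) = i + 1) {j k : Fin n} (hjk : j < k)
    (hne : ¬ (j = i ∧ k = i')) : Equiv.swap i i' j < Equiv.swap i i' k := by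
  simp only [Equiv.swap_apply_def]
  simp only [Fin.ext_iff, Fin.lt_def] at *
  split_ifs <;> omega

/-- The inversions of `f ∘ (i i+1)` are the images of those of `f`, and `(i, i+1)` itself. -/
lemma tupleInv_comp_swap {α : Type*} [LinearOrder α] (hi : (i' : ℕ) = i + 1) (f : Fin n → α)
    (hf : f i < f i') : tupleInv (f ∘ Equiv.swap i i') = tupleInv f + 1 := by
  classical
  have hlt : i < i' := by rw [Fin.lt_def]; omega
  unfold tupleInv
  conv_rhs => rw [← Finset.card_map ((Equiv.prodCongr (Equiv.swap i i') (Equiv.swap i i')).toEmbedding)]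
  rw [← Finset.card_insert_of_notMem (a := (i, i'))]
  · congr 1
    ext ⟨j, k⟩
    simp only [Finset.mem_insert, Finset.mem_map_equiv, Finset.mem_filter, Finset.mem_univ,
      true_and, Prod.mk.injEq, Equiv.prodCongr_symm, Equiv.symm_swap, Equiv.prodCongr_apply,
      Prod.map_apply, Function.comp_apply]
    constructor
    · rintro ⟨h1, h2⟩
      by_cases hne : j = i ∧ k = i'
      · exact Or.inl hne
      · exact Or.inr ⟨swap_lt_swap hi h1 hne, h2⟩
    · rintro (⟨rfl, rfl⟩ | ⟨h1, h2⟩)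
      · simpa using ⟨hlt, hf⟩
      · refine ⟨?_, h2⟩
        have := swap_lt_swap hi h1 (fun h => by
          rw [h.1, h.2] at h2
          exact absurd h2 (not_lt.2 hf.le))
        simpa using this
  · simp only [Finset.mem_map_equiv, Finset.mem_filter, Finset.mem_univ, true_and,
      Equiv.prodCongr_symm, Equiv.symm_swap, Equiv.prodCongr_apply, Prod.map_apply,
      Equiv.swap_apply_left, Equiv.swap_apply_right]
    exact fun h => absurd h.1 (not_lt.2 hlt.le)

lemma exists_adjacent_descent (f : Fin n → Fin n) (h : ¬ Monotone f) :
    ∃ i i' : Fin n, (i' : ℕ) = i + 1 ∧ f i' < f i := by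
  by_contra! hc
  apply h
  cases n with
  | zero => exact fun a => a.elim0
  | succ m =>
    rw [Fin.monotone_iff_le_succ]
    exact fun i => hc i.castSucc i.succ (by simp)

lemma exists_adjacent_eq (f : Fin n → Fin n) (h : Monotone f) (hinj : ¬ Function.Injective f) :
    ∃ i i' : Fin n, (i' : ℕ) = i + 1 ∧ f i = f i' := by
  by_contra! hc
  apply hinj
  cases n with
  | zero => exact fun a => a.elim0
  | succ m =>
    apply StrictMono.injective
    rw [Fin.strictMono_iff_lt_succ]
    exact fun i => lt_of_le_of_ne (h (Fin.castSucc_lt_succ).le) (hc i.castSucc i.succ (by simp))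

/-- Sorting by adjacent transpositions, as an induction principle on tuples. -/
lemma sort_induction {motive : (Fin n → Fin n) → Prop}
    (mono : ∀ f, Monotone f → motive f)
    (step : ∀ f (i i' : Fin n), (i' : ℕ) = i + 1 → f i' < f i →
      tupleInv f = tupleInv (f ∘ Equiv.swap i i') + 1 → motive (f ∘ Equiv.swap i i') → motive f)
    (f : Fin n → Fin n) : motive f := by
  induction hk : tupleInv f using Nat.strong_induction_on generalizing f with
  | _ k ih =>
    by_cases hmono : Monotone f
    · exact mono f hmono
    · obtain ⟨i, i', hi, hlt⟩ := exists_adjacent_descent f hmono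
      have h := tupleInv_comp_swap hi (f ∘ Equiv.swap i i') (by simpa using hlt)
      have hss : (f ∘ Equiv.swap i i') ∘ Equiv.swap i i' = f := by
        funext j
        simp
      rw [hss] at h
      exact step f i i' hi hlt h (ih _ (by omega) _ rfl)

end Inversions

/-! ### Ordered products -/

section Products

variable {R : Type*} [Ring R]

/-- Isolates the adjacent factors `i`, `i+1` of an ordered product, with outer factors that depend
only on the other entries. -/
lemma exists_prod_split {n : ℕ} {i i' : Fin n} (hi : (i' : ℕ) = i + 1) (g₀ : Fin n → R) :
    ∃ P S : R, ∀ g : Fin n → R, (∀ j, j ≠ i → j ≠ i' → g j = g₀ j) →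
      (List.ofFn g).prod = P * (g i * g i') * S := by
  refine ⟨((List.ofFn g₀).take i).prod, ((List.ofFn g₀).drop (i + 2)).prod, fun g hg => ?_⟩
  have h1 : (List.ofFn g₀).take i = (List.ofFn g).take i := by
    apply List.ext_getElem
    · simp
    · intro k hk hk'
      simp only [List.length_take, List.length_ofFn] at hk
      simp only [List.getElem_take, List.getElem_ofFn]
      refine (hg _ ?_ ?_).symm <;> simp only [ne_eq, Fin.ext_iff] <;> omega
  have h2 : (List.ofFn g₀).drop (i + 2) = (List.ofFn g).drop (i + 2) := by
    apply List.ext_getElem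
    · simp
    · intro k hk hk'
      simp only [List.getElem_drop, List.getElem_ofFn]
      refine (hg _ ?_ ?_).symm <;> simp only [ne_eq, Fin.ext_iff] <;> omega
  have hi1 : (i : ℕ) + 1 < n := hi ▸ i'.2
  have hii : (⟨i + 1, hi1⟩ : Fin n) = i' := Fin.ext hi.symm
  rw [h1, h2]
  conv_lhs => rw [← List.take_append_drop i (List.ofFn g)]
  rw [List.prod_append, List.drop_eq_getElem_cons (by simp),
    List.drop_eq_getElem_cons (by simpa using hi1)]
  simp [hii, mul_assoc]

lemma prod_ofFn_mul {n : ℕ} (a b : Fin n → R) (h : ∀ i j, a i * b j = b j * a i) :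
    (List.ofFn fun i => a i * b i).prod = (List.ofFn a).prod * (List.ofFn b).prod := by
  induction n with
  | zero => simp
  | succ m ih =>
    have hc : Commute (b 0) (List.ofFn fun i : Fin m => a i.succ).prod := by
      apply Commute.list_prod_right
      intro x hx
      obtain ⟨j, rfl⟩ := List.mem_ofFn.1 hx
      exact (h _ _).symm
    simp only [List.ofFn_succ, List.prod_cons]
    rw [ih (fun i => a i.succ) (fun i => b i.succ) (fun i j => h _ _)]
    simp only [mul_assoc]
    rw [← mul_assoc (b 0), hc.eq, mul_assoc]

lemma prod_ofFn_sum {ι : Type*} [Fintype ι] {n : ℕ} (F : Fin n → ι → R) :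
    (List.ofFn fun i => ∑ k, F i k).prod =
      ∑ f : Fin n → ι, (List.ofFn fun i => F i (f i)).prod := by
  induction n with
  | zero => simp
  | succ m ih =>
    rw [← (Fin.consEquiv fun _ => ι).sum_comp, Fintype.sum_prod_type]
    simp only [List.ofFn_succ, List.prod_cons, Fin.consEquiv_apply, Fin.cons_zero, Fin.cons_succ]
    rw [ih (fun i => F i.succ), Finset.sum_mul_sum]

end Products

/-! ### Quantum determinants with selected rows -/

section RowDet

variable {R : Type*} [Ring R] {n : ℕ}

/-- The coefficient `(-q)^{-k}`. -/
def coef (q : Rˣ) (k : ℕ) : R := (((-q) ^ (-(k : ℤ)) : Rˣ) : R)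

/-- The summand `(-q)^{-ℓ(σ)} y_{f 1,σ 1} ⋯ y_{f n,σ n}` of `qRowDet`. -/
def qTerm (q : Rˣ) (Y : Matrix (Fin n) (Fin n) R) (f : Fin n → Fin n)
    (σ : Equiv.Perm (Fin n)) : R :=
  coef q (tupleInv fun i => σ i) * (List.ofFn fun i => Y (f i) (σ i)).prod

/-- The quantum determinant of the matrix whose `i`-th row is row `f i` of `Y`. -/
def qRowDet (q : Rˣ) (Y : Matrix (Fin n) (Fin n) R) (f : Fin n → Fin n) : R :=
  ∑ σ : Equiv.Perm (Fin n), qTerm q Y f σ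

variable (q : Rˣ) (hq : ∀ r : R, (q : R) * r = r * (q : R))

lemma coef_zero : coef q 0 = 1 := by simp [coef]

lemma coef_succ (k : ℕ) : coef q (k + 1) = -(((q⁻¹ : Rˣ) : R) * coef q k) := by
  have h : (-q) ^ (-((k + 1 : ℕ) : ℤ)) = (-q)⁻¹ * (-q) ^ (-(k : ℤ)) := by
    rw [← zpow_neg_one, ← zpow_add]
    congr 1
    push_cast
    ring
  rw [coef, coef, h, Units.val_mul, inv_neg, Units.val_neg, neg_mul]

include hq in
lemma inv_central (r : R) : Commute ((q⁻¹ : Rˣ) : R) r :=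
  Commute.units_inv_left (hq r)

include hq in
lemma coef_central (k : ℕ) (r : R) : Commute (coef q k) r := by
  induction k with
  | zero => rw [coef_zero]; exact Commute.one_left r
  | succ k ih =>
    rw [coef_succ]
    exact ((inv_central q hq r).mul_left ih).neg_left

variable (Y : Matrix (Fin n) (Fin n) R)

include hq in
/-- Pairing `σ` with `σ ∘ (i i+1)` isolates a `2 × 2` quantum minor of rows `g i`, `g (i+1)`; the
outer factors depend only on the remaining rows. -/
lemma exists_pair {i i' : Fin n} (hi : (i' : ℕ) = i + 1) (f : Fin n → Fin n)
    (σ : Equiv.Perm (Fin n)) (hσ : σ i < σ i') :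
    ∃ P S : R, ∀ g : Fin n → Fin n, (∀ j, j ≠ i → j ≠ i' → g j = f j) →
      qTerm q Y g σ + qTerm q Y g (σ * Equiv.swap i i') =
        P * (Y (g i) (σ i) * Y (g i') (σ i') -
          ((q⁻¹ : Rˣ) : R) * (Y (g i) (σ i') * Y (g i') (σ i))) * S := by
  obtain ⟨P, S, hPS⟩ := exists_prod_split hi (fun j => Y (f j) (σ j))
  refine ⟨coef q (tupleInv fun i => σ i) * P, S, fun g hg => ?_⟩
  have hinv : (tupleInv fun j => (σ * Equiv.swap i i') j) = (tupleInv fun j => σ j) + 1 :=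
    tupleInv_comp_swap hi (fun j => σ j) hσ
  unfold qTerm
  rw [hinv, hPS _ (fun j h1 h2 => by rw [hg j h1 h2]),
    hPS (fun j => Y (g j) ((σ * Equiv.swap i i') j)) (fun j h1 h2 => by
      simp [hg j h1 h2, Equiv.swap_apply_of_ne_of_ne h1 h2])]
  simp only [Equiv.Perm.mul_apply, Equiv.swap_apply_left, Equiv.swap_apply_right, coef_succ,
    mul_sub, sub_mul, neg_mul, ← sub_eq_add_neg]
  have hu := inv_central q hq (coef q (tupleInv fun i => σ i) * P)
  congr 1
  · simp only [mul_assoc]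
  · calc _ = ((q⁻¹ : Rˣ) : R) * (coef q (tupleInv fun i => σ i) * P) *
          (Y (g i) (σ i') * Y (g i') (σ i)) * S := by simp only [mul_assoc]
      _ = _ := by rw [hu.eq]; simp only [mul_assoc]

/-- A sum over permutations vanishes if it cancels along the pairs `σ`, `σ ∘ (i i+1)`. -/
lemma sum_eq_zero_of_pair {i i' : Fin n} (hne : i ≠ i') (F : Equiv.Perm (Fin n) → R)
    (h : ∀ σ, σ i < σ i' → F σ + F (σ * Equiv.swap i i') = 0) : ∑ σ, F σ = 0 := by
  refine Finset.sum_involution (fun σ _ => σ * Equiv.swap i i') ?_ ?_ ?_ ?_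
  · intro σ _
    rcases lt_or_gt_of_ne (fun he => hne (σ.injective he)) with hlt | hlt
    · exact h σ hlt
    · have := h (σ * Equiv.swap i i') (by simpa using hlt)
      rw [mul_assoc, Equiv.swap_mul_self, mul_one] at this
      rwa [add_comm]
  · intro σ _ _ he
    rw [mul_eq_left, Equiv.swap_eq_one_iff] at he
    exact hne he
  · simp
  · intro σ _
    simp [mul_assoc]

variable {Y} (hY : qGeneric q Y)

include hq hY in
lemma qRowDet_of_eq {i i' : Fin n} (hi : (i' : ℕ) = i + 1) (f : Fin n → Fin n)
    (hf : f i = f i') : qRowDet q Y f = 0 := by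
  have hne : i ≠ i' := fun h => by rw [h] at hi; omega
  refine sum_eq_zero_of_pair hne _ fun σ hσ => ?_
  obtain ⟨P, S, h⟩ := exists_pair q hq Y hi f σ hσ
  rw [h f (fun _ _ _ => rfl), ← hf, hY.1 _ _ _ hσ, ← mul_assoc ((q⁻¹ : Rˣ) : R)]
  simp

include hq hY in
lemma qRowDet_of_lt {i i' : Fin n} (hi : (i' : ℕ) = i + 1) (f : Fin n → Fin n)
    (hf : f i' < f i) :
    qRowDet q Y f = -(((q⁻¹ : Rˣ) : R) * qRowDet q Y (f ∘ Equiv.swap i i')) := by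
  have hne : i ≠ i' := fun h => by rw [h] at hi; omega
  rw [eq_neg_iff_add_eq_zero]
  unfold qRowDet
  rw [Finset.mul_sum, ← Finset.sum_add_distrib]
  refine sum_eq_zero_of_pair hne _ fun σ hσ => ?_
  obtain ⟨P, S, h⟩ := exists_pair q hq Y hi f σ hσ
  rw [add_add_add_comm, ← mul_add, h f (fun _ _ _ => rfl),
    h (f ∘ Equiv.swap i i') (fun j h1 h2 => by simp [Equiv.swap_apply_of_ne_of_ne h1 h2])]
  simp only [Function.comp_apply, Equiv.swap_apply_left, Equiv.swap_apply_right]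
  have hu : ∀ Z : R, ((q⁻¹ : Rˣ) : R) * (P * Z * S) = P * (((q⁻¹ : Rˣ) : R) * Z) * S := by
    intro Z
    rw [← mul_assoc, ← mul_assoc, (inv_central q hq P).eq, mul_assoc P]
  rw [hu, ← add_mul, ← mul_add,
    hY.2.2.1 _ _ _ _ hf hσ, hY.2.2.2 _ _ _ _ hf hσ]
  -- with `u = q⁻¹` the bracket is `bc - u (ad + (q - u) bc) + u (ad - u bc) = 0`
  have hz : ∀ A B : R, B - ((q⁻¹ : Rˣ) : R) * (A + ((q : R) - ((q⁻¹ : Rˣ) : R)) * B) +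
      ((q⁻¹ : Rˣ) : R) * (A - ((q⁻¹ : Rˣ) : R) * B) = 0 := by
    intro A B
    simp only [mul_add, mul_sub, sub_mul, Units.inv_mul_cancel_left]
    abel
  rw [hz, mul_zero, zero_mul]

include hq hY in
lemma qRowDet_eq_zero (f : Fin n → Fin n) (hf : ¬ Function.Injective f) :
    qRowDet q Y f = 0 := by
  induction f using sort_induction with
  | mono f hmono =>
    obtain ⟨i, i', hi, he⟩ := exists_adjacent_eq f hmono hf
    exact qRowDet_of_eq q hq hY hi f he
  | step f i i' hi hlt _ ih =>
    rw [qRowDet_of_lt q hq hY hi f hlt, ih (by simpa using hf), mul_zero, neg_zero]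

include hq hY in
lemma qRowDet_eq (f : Fin n → Fin n) (hf : Function.Injective f) :
    qRowDet q Y f = coef q (tupleInv f) * qdet q Y := by
  induction f using sort_induction with
  | mono f hmono =>
    have hid : f = id := (hmono.strictMono_of_injective hf).eq_id
    have h0 : tupleInv (id : Fin n → Fin n) = 0 := by
      simp only [tupleInv, id, Finset.card_eq_zero, Finset.filter_eq_empty_iff]
      exact fun p _ h => lt_asymm h.1 h.2
    rw [hid, h0, coef_zero, one_mul]
    rfl
  | step f i i' hi hlt hinv ih =>
    rw [qRowDet_of_lt q hq hY hi f hlt, ih (by simpa using hf), hinv, coef_succ, neg_mul,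
      mul_assoc]

end RowDet

end QDet

/-- Multiplicativity of the quantum determinant for `q`-generic matrices
with mutually commuting entries. -/
theorem stmt3 {R : Type*} [Ring R] (q : Rˣ) (hq : ∀ r : R, (q : R) * r = r * (q : R))
    {n : ℕ} (X Y : Matrix (Fin n) (Fin n) R) (hX : qGeneric q X) (hY : qGeneric q Y)
    (hcomm : ∀ (i j k l : Fin n), X i j * Y k l = Y k l * X i j) :
    qdet q (X * Y) = qdet q X * qdet q Y := by
  calc qdet q (X * Y)
      = ∑ σ : Equiv.Perm (Fin n), ∑ f : Fin n → Fin n,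
          (List.ofFn fun i => X i (f i)).prod * QDet.qTerm q Y f σ := by
        refine Finset.sum_congr rfl fun σ _ => ?_
        simp only [Matrix.mul_apply]
        rw [QDet.prod_ofFn_sum, Finset.mul_sum]
        refine Finset.sum_congr rfl fun f _ => ?_
        rw [QDet.prod_ofFn_mul _ _ fun i j => hcomm _ _ _ _, QDet.qTerm, ← mul_assoc,
          ← mul_assoc, ← (QDet.coef_central q hq _ _).eq]
        rfl
    _ = ∑ f : Fin n → Fin n, (List.ofFn fun i => X i (f i)).prod * QDet.qRowDet q Y f := by
        rw [Finset.sum_comm]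
        simp only [QDet.qRowDet, Finset.mul_sum]
    _ = ∑ σ : Equiv.Perm (Fin n),
          (List.ofFn fun i => X i (σ i)).prod * QDet.qRowDet q Y σ := by
        symm
        refine Fintype.sum_of_injective (fun σ : Equiv.Perm (Fin n) => (σ : Fin n → Fin n))
          DFunLike.coe_injective _ _ (fun f hf => ?_) fun _ => rfl
        rw [QDet.qRowDet_eq_zero q hq hY f, mul_zero]
        exact fun hinj => hf
          ⟨Equiv.ofBijective f (Finite.injective_iff_bijective.1 hinj), rfl⟩
    _ = qdet q X * qdet q Y := by
        rw [qdet, Finset.sum_mul]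
        refine Finset.sum_congr rfl fun σ _ => ?_
        rw [QDet.qRowDet_eq q hq hY σ σ.injective, ← mul_assoc,
          ← (QDet.coef_central q hq _ _).eq]
        rfl
end

section
/- Let R be a ring with a central invertible element q, and let X be an n×n q-generic matrix over R. Define the n×n matrix S(X) by S(X)_{ij} = (−q)^{j−i}·det_q(X^{ji}), where X^{ji} is the (n−1)×(n−1) matrix obtained from X by deleting row j and column i. Then S(X)·X = X·S(X) = (det_q X)·I_n, where I_n is the identity matrix. -/
/-- The quantum adjugate `S(X)_{ij} = (-q)^{j-i} det_q (X^{ji})`, where `X^{ji}` is `X` with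
row `j` and column `i` deleted. -/
def qAdjugate {R : Type*} [Ring R] {n : ℕ} (q : Rˣ) (X : Matrix (Fin (n+1)) (Fin (n+1)) R) :
    Matrix (Fin (n+1)) (Fin (n+1)) R :=
  Matrix.of fun i j =>
    (((-q) ^ ((j.val : ℤ) - (i.val : ℤ)) : Rˣ) : R) *
      qdet q (X.submatrix j.succAbove i.succAbove)

open Finset

/-! ### Row determinants by recursive Laplace expansion -/

set_option linter.unusedSectionVars false

section QuantumLaplace

variable {K R ι κ : Type*} [CommRing K] [Ring R] [Algebra K R] [LinearOrder ι] [LinearOrder κ]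

/-- The quantum matrix relations over an algebra `R` over a commutative ring `K`, with `q` a unit of
`K`. Taking the scalars from `K` makes the powers of `q` central. -/
structure QRel_s4 (q : Kˣ) (X : Matrix ι κ R) : Prop where
  row : ∀ (k : ι) (i j : κ), i < j → X k j * X k i = (q : K) • (X k i * X k j)
  col : ∀ (i j : ι) (k : κ), i < j → X j k * X i k = (q : K) • (X i k * X j k)
  anti : ∀ (i j : ι) (k l : κ), i < j → k < l → X j k * X i l = X i l * X j k
  diag : ∀ (i j : ι) (k l : κ), i < j → k < l →
    X j l * X i k = X i k * X j l + ((q : K) - ((q⁻¹ : Kˣ) : K)) • (X i l * X j k)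

theorem QRel_s4.transpose {q : Kˣ} {X : Matrix ι κ R} (h : QRel_s4 q X) : QRel_s4 q X.transpose where
  row k i j hij := h.col i j k hij
  col i j k hij := h.row k i j hij
  anti i j k l hij hkl := (h.anti k l i j hkl hij).symm
  diag i j k l hij hkl := by
    simp only [Matrix.transpose_apply]
    rw [h.diag k l i j hkl hij, h.anti k l i j hkl hij]

/-- `rowDet p X L C` is the quantum minor with the sequence of rows `L` (in any order, possibly with
repetitions) and the set of columns `C`, defined by expansion along the first row; the parameter `p`
stands for `(-q)⁻¹`. It is meaningful only for `#C = L.length`. -/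
def rowDet (p : K) (X : Matrix ι κ R) : List ι → Finset κ → R
  | [], _ => 1
  | a :: L, C => ∑ k ∈ C, p ^ #{c ∈ C | c < k} • (X a k * rowDet p X L (C.erase k))

theorem card_lt_erase_of_lt_s4 {C : Finset κ} {k l : κ} (hk : k ∈ C) (h : k < l) :
    #{c ∈ C.erase k | c < l} + 1 = #{c ∈ C | c < l} := by
  rw [filter_erase]
  exact card_erase_add_one (by simp [hk, h])

theorem card_lt_erase_of_le {C : Finset κ} {k l : κ} (h : l ≤ k) :
    #{c ∈ C.erase k | c < l} = #{c ∈ C | c < l} := by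
  rw [filter_erase, erase_eq_of_notMem (by simp [h])]

theorem card_gt_erase_of_lt_s4 {C : Finset κ} {k l : κ} (hk : k ∈ C) (h : l < k) :
    #{c ∈ C.erase k | l < c} + 1 = #{c ∈ C | l < c} := by
  rw [filter_erase]
  exact card_erase_add_one (by simp [hk, h])

theorem card_gt_erase_of_le {C : Finset κ} {k l : κ} (h : k ≤ l) :
    #{c ∈ C.erase k | l < c} = #{c ∈ C | l < c} := by
  rw [filter_erase, erase_eq_of_notMem (by simp [h])]

/-- A sum over ordered pairs of distinct elements, grouped by unordered pairs. -/
theorem sum_sum_erase_eq_sum_lt {M : Type*} [AddCommMonoid M] (C : Finset κ) (f : κ → κ → M) :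
    ∑ k ∈ C, ∑ l ∈ C.erase k, f k l = ∑ k ∈ C, ∑ l ∈ C with k < l, (f k l + f l k) := by
  have h1 : ∀ k ∈ C, ∑ l ∈ C.erase k, f k l
      = (∑ l ∈ C, if k < l then f k l else 0) + ∑ l ∈ C, if l < k then f k l else 0 := by
    intro k hk
    rw [← sum_add_distrib, ← add_sum_erase C _ hk]
    simp only [lt_self_iff_false, if_false, zero_add, add_zero]
    refine sum_congr rfl fun l hl => ?_
    rcases lt_or_gt_of_ne (ne_of_mem_erase hl) with h | h <;> simp [h, h.not_gt]
  rw [sum_congr rfl h1, sum_add_distrib,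
    sum_comm (s := C) (t := C) (f := fun k l => if l < k then f k l else 0),
    ← sum_add_distrib]
  refine sum_congr rfl fun k _ => ?_
  rw [sum_filter, ← sum_add_distrib]
  refine sum_congr rfl fun l _ => ?_
  split_ifs <;> simp

/-- The quantum `2 × 2` minor with rows `a`, `b` and columns `k`, `l`, where `p = (-q)⁻¹`. -/
def twoMinor (p : K) (X : Matrix ι κ R) (a b : ι) (k l : κ) : R :=
  X a k * X b l + p • (X a l * X b k)

/-- Laplace expansion along the first two rows. It reduces the behaviour of `rowDet` under exchange
of neighbouring rows to that of `2 × 2` minors. -/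
theorem rowDet_cons_cons (p : K) (X : Matrix ι κ R) (a b : ι) (L : List ι) (C : Finset κ) :
    rowDet p X (a :: b :: L) C = ∑ k ∈ C, ∑ l ∈ C with k < l,
      p ^ (#{c ∈ C | c < k} + #{c ∈ C.erase k | c < l}) •
        (twoMinor p X a b k l * rowDet p X L ((C.erase k).erase l)) := by
  have h : rowDet p X (a :: b :: L) C = ∑ k ∈ C, ∑ l ∈ C.erase k,
      p ^ (#{c ∈ C | c < k} + #{c ∈ C.erase k | c < l}) •
        (X a k * X b l * rowDet p X L ((C.erase k).erase l)) := by
    simp only [rowDet, mul_sum, smul_sum, mul_smul_comm, smul_smul, pow_add, mul_assoc]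
  rw [h, sum_sum_erase_eq_sum_lt]
  refine sum_congr rfl fun k hk => sum_congr rfl fun l hl => ?_
  obtain ⟨hl, hkl⟩ := mem_filter.1 hl
  rw [twoMinor, add_mul, smul_add, erase_right_comm (a := l), smul_mul_assoc, smul_smul,
    ← pow_succ]
  congr 3
  rw [card_lt_erase_of_le hkl.le, ← card_lt_erase_of_lt_s4 hk hkl]
  ring

/-! ### Alternation in the rows -/

section Relations

variable {q : Kˣ} {X : Matrix ι κ R}

local notation "ε" => (-((q⁻¹ : Kˣ) : K))

theorem QRel_s4.twoMinor_self (h : QRel_s4 q X) (a : ι) {k l : κ} (hkl : k < l) :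
    twoMinor ε X a a k l = 0 := by
  rw [twoMinor, h.row a k l hkl, smul_smul, neg_mul, Units.inv_mul, neg_one_smul, add_neg_cancel]

theorem QRel_s4.twoMinor_swap (h : QRel_s4 q X) {a b : ι} (hab : a < b) {k l : κ} (hkl : k < l) :
    twoMinor ε X b a k l = ε • twoMinor ε X a b k l := by
  have hq : ((q⁻¹ : Kˣ) : K) * (q : K) = 1 := Units.inv_mul q
  rw [twoMinor, twoMinor, h.anti a b k l hab hkl, h.diag a b k l hab hkl]
  have : X a l * X b k = (1 : K) • (X a l * X b k) := (one_smul _ _).symm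
  simp only [smul_add, smul_smul]
  rw [this]
  simp only [smul_smul]
  have : ε * ((q : K) - ((q⁻¹ : Kˣ) : K)) * 1 = -1 + ε * ε * 1 := by linear_combination -hq
  rw [this, add_smul]
  simp only [neg_smul]
  abel

theorem QRel_s4.rowDet_self (h : QRel_s4 q X) (a : ι) (L : List ι) (C : Finset κ) :
    rowDet ε X (a :: a :: L) C = 0 := by
  rw [rowDet_cons_cons]
  refine sum_eq_zero fun k _ => sum_eq_zero fun l hl => ?_
  rw [h.twoMinor_self a (mem_filter.1 hl).2, zero_mul, smul_zero]

theorem QRel_s4.rowDet_swap (h : QRel_s4 q X) {a b : ι} (hab : a < b) (L : List ι) (C : Finset κ) :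
    rowDet ε X (b :: a :: L) C = ε • rowDet ε X (a :: b :: L) C := by
  simp only [rowDet_cons_cons, smul_sum]
  refine sum_congr rfl fun k _ => sum_congr rfl fun l hl => ?_
  rw [h.twoMinor_swap hab (mem_filter.1 hl).2, smul_mul_assoc, smul_comm]

theorem rowDet_cons_congr {p u : K} {L L' : List ι}
    (h : ∀ C, rowDet p X L C = u • rowDet p X L' C) (a : ι) (C : Finset κ) :
    rowDet p X (a :: L) C = u • rowDet p X (a :: L') C := by
  simp only [rowDet, h, smul_sum, mul_smul_comm]
  exact sum_congr rfl fun k _ => smul_comm _ _ _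

theorem rowDet_append_congr {p u : K} {L L' : List ι}
    (h : ∀ C, rowDet p X L C = u • rowDet p X L' C) (P : List ι) (C : Finset κ) :
    rowDet p X (P ++ L) C = u • rowDet p X (P ++ L') C := by
  induction P generalizing C with
  | nil => exact h C
  | cons a P ih => exact rowDet_cons_congr ih a C

theorem QRel_s4.rowDet_move_right (h : QRel_s4 q X) (i : ι) (S T : List ι) (hS : ∀ b ∈ S, b < i)
    (C : Finset κ) :
    rowDet ε X (i :: (S ++ T)) C = ε ^ S.length • rowDet ε X (S ++ i :: T) C := by
  induction S generalizing C with
  | nil => simp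
  | cons b S ih =>
    rw [List.cons_append, h.rowDet_swap (hS b (by simp)),
      rowDet_cons_congr (ih fun c hc => hS c (by simp [hc])) b, smul_smul, List.length_cons,
      pow_succ', List.cons_append]

theorem QRel_s4.rowDet_move_left (h : QRel_s4 q X) (i : ι) (S T : List ι) (hT : ∀ b ∈ T, i < b)
    (C : Finset κ) :
    rowDet ε X (S ++ T ++ [i]) C = ε ^ T.length • rowDet ε X (S ++ i :: T) C := by
  rw [List.append_assoc]
  refine rowDet_append_congr (fun C => ?_) S C
  induction T generalizing C with
  | nil => simp
  | cons b T ih =>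
    rw [List.cons_append, rowDet_cons_congr (ih fun c hc => hT c (by simp [hc])) b,
      h.rowDet_swap (hT b (by simp)), smul_smul, List.length_cons, pow_succ]

/-- The repeated row `i` is moved next to its copy, where the minor vanishes. -/
theorem QRel_s4.rowDet_cons_of_mem (h : QRel_s4 q X) {i : ι} {L : List ι} (hL : L.Pairwise (· < ·))
    (hi : i ∈ L) (C : Finset κ) : rowDet ε X (i :: L) C = 0 := by
  obtain ⟨S, T, rfl⟩ := List.append_of_mem hi
  rw [List.pairwise_append] at hL
  rw [h.rowDet_move_right i S _ fun b hb => hL.2.2 b hb i (by simp),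
    rowDet_append_congr (u := 0) (L' := []) (fun C => by rw [h.rowDet_self, zero_smul]),
    zero_smul, smul_zero]

theorem QRel_s4.rowDet_concat_of_mem (h : QRel_s4 q X) {i : ι} {L : List ι} (hL : L.Pairwise (· < ·))
    (hi : i ∈ L) (C : Finset κ) : rowDet ε X (L ++ [i]) C = 0 := by
  obtain ⟨S, T, rfl⟩ := List.append_of_mem hi
  rw [List.pairwise_append, List.pairwise_cons] at hL
  have := h.rowDet_move_left i (S ++ [i]) T hL.2.1.1 C
  simp only [List.append_assoc, List.cons_append, List.nil_append]
    at this ⊢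
  rw [this,
    rowDet_append_congr (u := 0) (L' := []) (fun C => by rw [h.rowDet_self, zero_smul]),
    zero_smul, smul_zero]

end Relations

/-! ### Expansion along the last row, and transposition -/

/-- Laplace expansion along the last row; this holds without any relation between the entries. -/
theorem rowDet_concat (p : K) (X : Matrix ι κ R) (L : List ι) (b : ι) (C : Finset κ)
    (hC : #C = L.length + 1) :
    rowDet p X (L ++ [b]) C =
      ∑ k ∈ C, p ^ #{c ∈ C | k < c} • (rowDet p X L (C.erase k) * X b k) := by
  induction L generalizing C with
  | nil =>
    obtain ⟨c, rfl⟩ := card_eq_one.1 hC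
    simp [rowDet, filter_singleton]
  | cons a L ih =>
    have h1 : rowDet p X (a :: L ++ [b]) C = ∑ l ∈ C, ∑ k ∈ C.erase l,
        p ^ (#{c ∈ C | c < l} + #{c ∈ C.erase l | k < c}) •
          (X a l * rowDet p X L ((C.erase l).erase k) * X b k) := by
      rw [List.cons_append, rowDet]
      refine sum_congr rfl fun l hl => ?_
      rw [ih _ (by rw [card_erase_of_mem hl, hC]; simp)]
      simp only [mul_sum, smul_sum, mul_smul_comm, smul_smul, pow_add, mul_assoc]
    have h2 : ∑ k ∈ C, p ^ #{c ∈ C | k < c} • (rowDet p X (a :: L) (C.erase k) * X b k) =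
        ∑ k ∈ C, ∑ l ∈ C.erase k, p ^ (#{c ∈ C | k < c} + #{c ∈ C.erase k | c < l}) •
          (X a l * rowDet p X L ((C.erase k).erase l) * X b k) := by
      simp only [rowDet, sum_mul, smul_sum, smul_mul_assoc, smul_smul, pow_add]
    rw [h1, h2, sum_comm' (t' := C) (s' := fun k => C.erase k)
      (by intro l k; simp only [mem_erase]; tauto)]
    refine sum_congr rfl fun k hk => sum_congr rfl fun l hl => ?_
    obtain ⟨hne, hl⟩ := mem_erase.1 hl
    rw [erase_right_comm (a := l)]
    congr 2
    rcases lt_or_gt_of_ne hne with hlk | hkl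
    · rw [card_gt_erase_of_le hlk.le, card_lt_erase_of_le hlk.le, add_comm]
    · rw [← card_gt_erase_of_lt_s4 hl hkl, ← card_lt_erase_of_lt_s4 hk hkl]
      ring

theorem rowDet_sort_insert (p : K) (X : Matrix ι κ R) {a : ι} {A : Finset ι}
    (ha : ∀ b ∈ A, a < b) (C : Finset κ) :
    rowDet p X ((insert a A).sort (· ≤ ·)) C =
      ∑ k ∈ C, p ^ #{c ∈ C | c < k} • (X a k * rowDet p X (A.sort (· ≤ ·)) (C.erase k)) := by
  rw [sort_insert _ (fun b hb => (ha b hb).le) fun h => (ha a h).false, rowDet]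

theorem exists_eq_insert_min {m : ℕ} {s : Finset ι} (hs : #s = m + 1) :
    ∃ a t, (∀ b ∈ t, a < b) ∧ #t = m ∧ s = insert a t := by
  have hne : s.Nonempty := card_pos.1 (by omega)
  refine ⟨s.min' hne, s.erase (s.min' hne), fun b hb => min'_lt_of_mem_erase_min' _ _ hb, ?_,
    (insert_erase (min'_mem s hne)).symm⟩
  rw [card_erase_of_mem (min'_mem s hne), hs, Nat.add_sub_cancel]

/-- Expansion along the first row `a`, followed by expansion along the first column `c` of the minors
that still contain it. The hypothesis `ih` is transposition invariance for minors one size smaller. -/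
theorem rowDet_insert_insert (p : K) (X : Matrix ι κ R) {m : ℕ}
    (ih : ∀ (A : Finset ι) (C : Finset κ), #A = m → #C = m →
      rowDet p X (A.sort (· ≤ ·)) C = rowDet p X.transpose (C.sort (· ≤ ·)) A)
    {a : ι} {A : Finset ι} {c : κ} {C : Finset κ} (ha : ∀ b ∈ A, a < b) (hc : ∀ k ∈ C, c < k)
    (hA : #A = m) (hC : #C = m) :
    rowDet p X ((insert a A).sort (· ≤ ·)) (insert c C) =
      X a c * rowDet p X (A.sort (· ≤ ·)) C +
      ∑ k ∈ C, ∑ b ∈ A, p ^ (#{d ∈ C | d < k} + 1 + #{d ∈ A | d < b}) •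
        (X a k * X b c * rowDet p X.transpose ((C.erase k).sort (· ≤ ·)) (A.erase b)) := by
  have hcC : c ∉ C := fun h => (hc c h).false
  rw [rowDet_sort_insert p X ha, sum_insert hcC, erase_insert hcC]
  congr 1
  · have : #{d ∈ insert c C | d < c} = 0 := by
      rw [card_eq_zero, filter_eq_empty_iff]
      intro d hd
      rcases mem_insert.1 hd with rfl | hd
      · exact lt_irrefl _
      · exact (hc d hd).not_gt
    rw [this, pow_zero, one_smul]
  · refine sum_congr rfl fun k hk => ?_
    have hck := hc k hk
    have hcard : #{d ∈ insert c C | d < k} = #{d ∈ C | d < k} + 1 := by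
      rw [filter_insert, if_pos hck, card_insert_of_notMem (by simp [hcC])]
    have hcCk : c ∉ C.erase k := fun h => hcC (mem_of_mem_erase h)
    rw [hcard, erase_insert_of_ne hck.ne, ih A _ hA
      (by rw [card_insert_of_notMem hcCk, card_erase_add_one hk, hC]),
      rowDet_sort_insert p X.transpose fun d hd => hc d (mem_of_mem_erase hd)]
    simp only [mul_sum, smul_sum, mul_smul_comm, smul_smul, pow_add, mul_assoc,
      Matrix.transpose_apply]

/-- Transposition invariance of quantum minors. Expanding both sides along the first row and the
first column, corresponding terms differ only in the order of `X b c` and `X a k`, where `a < b` and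
`c < k`, and such entries commute. -/
theorem QRel_s4.rowDet_transpose {q : Kˣ} {X : Matrix ι κ R} (h : QRel_s4 q X) (p : K) (m : ℕ)
    (A : Finset ι) (C : Finset κ) (hA' : #A = m) (hC' : #C = m) :
    rowDet p X (A.sort (· ≤ ·)) C = rowDet p X.transpose (C.sort (· ≤ ·)) A := by
  induction m using Nat.strong_induction_on generalizing A C with
  | _ m ih =>
  obtain _ | m := m
  · rw [card_eq_zero.1 hA', card_eq_zero.1 hC']
    simp [rowDet]
  obtain ⟨a, A, ha, hA, rfl⟩ := exists_eq_insert_min hA'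
  obtain ⟨c, C, hc, hC, rfl⟩ := exists_eq_insert_min hC'
  rw [rowDet_insert_insert p X (ih m m.lt_succ_self) ha hc hA hC,
    rowDet_insert_insert p X.transpose
      (fun C A hC hA => (ih m m.lt_succ_self A C hA hC).symm) hc ha hC hA,
    ih m m.lt_succ_self A C hA hC, sum_comm, Matrix.transpose_apply]
  congr 1
  refine sum_congr rfl fun b hb => sum_congr rfl fun k hk => ?_
  have hm : 0 < m := by rw [← hA]; exact card_pos.2 ⟨b, hb⟩
  rw [Matrix.transpose_transpose, ih (m - 1) (by omega) (A.erase b) (C.erase k)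
    (by rw [card_erase_of_mem hb, hA]) (by rw [card_erase_of_mem hk, hC]),
    Matrix.transpose_apply, Matrix.transpose_apply, h.anti a b c k (ha b hb) (hc k hk)]
  congr 2
  ring

end QuantumLaplace

/-! ### Comparison with the permutation sum -/

section Expansion

variable {K R ι κ : Type*} [CommRing K] [Ring R] [Algebra K R] [LinearOrder ι] [LinearOrder κ]

theorem card_fin_lt {n : ℕ} (k : Fin n) : #{c | c < k} = (k : ℕ) := by
  rw [filter_gt_eq_Iio, Fin.card_Iio]

theorem card_fin_gt {n : ℕ} (k : Fin (n + 1)) : #{c | k < c} = n - (k : ℕ) := by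
  rw [filter_lt_eq_Ioi, Fin.card_Ioi, Nat.add_sub_cancel]

/-- The permutation with `0 ↦ k` whose remaining values, in order, are those of `τ` relabelled by
`k.succAbove`. -/
def consPerm {n : ℕ} (k : Fin (n + 1)) (τ : Equiv.Perm (Fin n)) : Equiv.Perm (Fin (n + 1)) :=
  (finSuccEquiv' 0).trans (τ.optionCongr.trans (finSuccEquiv' k).symm)

@[simp] theorem consPerm_zero {n : ℕ} (k : Fin (n + 1)) (τ : Equiv.Perm (Fin n)) :
    consPerm k τ 0 = k := by simp [consPerm]

@[simp] theorem consPerm_succ {n : ℕ} (k : Fin (n + 1)) (τ : Equiv.Perm (Fin n)) (i : Fin n) :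
    consPerm k τ i.succ = k.succAbove (τ i) := by
  have : finSuccEquiv' (0 : Fin (n + 1)) i.succ = some i := by
    rw [← Fin.succAbove_zero, finSuccEquiv'_succAbove]
  simp [consPerm, this]

theorem consPerm_bijective (n : ℕ) :
    Function.Bijective fun x : Fin (n + 1) × Equiv.Perm (Fin n) => consPerm x.1 x.2 := by
  rw [Fintype.bijective_iff_injective_and_card]
  refine ⟨?_, by simp [Fintype.card_perm, Nat.factorial_succ]⟩
  rintro ⟨k, τ⟩ ⟨k', τ'⟩ h
  have hk : k = k' := by simpa using Equiv.congr_fun h 0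
  subst hk
  refine Prod.ext rfl (Equiv.ext fun i => ?_)
  simpa using Equiv.congr_fun h i.succ

theorem tupleInv_eq_sum {m : ℕ} (f : Fin m → κ) :
    tupleInv f = ∑ i, ∑ j, if i < j ∧ f j < f i then 1 else 0 := by
  rw [tupleInv, card_filter, ← univ_product_univ, sum_product]

theorem tupleInv_consPerm {n : ℕ} (k : Fin (n + 1)) (τ : Equiv.Perm (Fin n)) :
    (tupleInv fun i => consPerm k τ i) = k + tupleInv fun i => τ i := by
  simp only [tupleInv_eq_sum, Fin.sum_univ_succ (n := n), consPerm_zero, consPerm_succ,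
    Fin.succ_lt_succ_iff, Fin.not_lt_zero, Fin.succ_pos, true_and, false_and, if_false, zero_add,
    Fin.succAbove_lt_succAbove_iff]
  congr 1
  rw [Equiv.sum_comp τ (fun j => if k.succAbove j < k then 1 else 0)]
  simp only [Fin.succAbove_lt_iff_castSucc_lt]
  rw [← card_filter]
  exact Fin.card_filter_val_lt.trans (min_eq_right (by omega))

theorem qdet_succ_row {n : ℕ} (q : Rˣ) (A : Matrix (Fin (n + 1)) (Fin (n + 1)) R)
    (hq : ∀ r : R, (q : R) * r = r * (q : R)) :
    qdet q A = ∑ k : Fin (n + 1), (((-q)⁻¹ ^ (k : ℕ) : Rˣ) : R) *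
      (A 0 k * qdet q (A.submatrix Fin.succ k.succAbove)) := by
  have hc : ∀ (z : ℤ) (r : R), Commute (((-q) ^ z : Rˣ) : R) r := by
    intro z r
    have h0 : Commute (((-q) : Rˣ) : R) r := by
      rw [Units.val_neg]; exact Commute.neg_left (hq r)
    exact h0.units_zpow_left z
  rw [qdet, ← (consPerm_bijective n).sum_comp, Fintype.sum_prod_type]
  refine sum_congr rfl fun k _ => ?_
  rw [qdet, mul_sum, mul_sum]
  refine sum_congr rfl fun τ _ => ?_
  simp only
  rw [tupleInv_consPerm, List.ofFn_succ, List.prod_cons]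
  simp only [consPerm_zero, consPerm_succ, Matrix.submatrix_apply]
  rw [← mul_assoc (A 0 k), ← (hc _ (A 0 k)).eq, mul_assoc _ (A 0 k),
    ← mul_assoc (Units.val _) (Units.val _),
    ← Units.val_mul]
  congr 2
  rw [Nat.cast_add, neg_add, zpow_add, inv_pow, zpow_neg, zpow_natCast]


theorem qdet_submatrix {p : K} {q : Rˣ} (hp : (((-q)⁻¹ : Rˣ) : R) = algebraMap K R p)
    (hq : ∀ r : R, (q : R) * r = r * (q : R)) (X : Matrix ι κ R) {m : ℕ} (r : Fin m → ι)
    (c : Fin m → κ) (hc : StrictMono c) :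
    qdet q (X.submatrix r c) = rowDet p X (List.ofFn r) (univ.image c) := by
  induction m with
  | zero => simp [qdet, rowDet, tupleInv]
  | succ m ih =>
    rw [qdet_succ_row q _ hq, List.ofFn_succ, rowDet, sum_image hc.injective.injOn]
    refine sum_congr rfl fun k _ => ?_
    have h1 : #{d ∈ univ.image c | d < c k} = (k : ℕ) := by
      rw [filter_image, card_image_of_injective _ hc.injective]
      simp only [hc.lt_iff_lt]
      exact card_fin_lt k
    have h2 : (univ.image c).erase (c k) = univ.image (c ∘ k.succAbove) := by
      rw [← image_image, ← image_erase hc.injective]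
      congr 1
      ext i
      simp
    rw [h1, h2, Matrix.submatrix_submatrix, ih _ _ (hc.comp (Fin.strictMono_succAbove k)),
      Units.val_pow_eq_pow_val, hp, ← map_pow, ← Algebra.smul_def]
    rfl

/-- Splitting the increasing list of all indices at `j`. -/
theorem ofFn_succAbove {n : ℕ} (j : Fin (n + 1)) :
    ∃ S T : List (Fin (n + 1)), List.ofFn j.succAbove = S ++ T ∧
      List.ofFn id = S ++ j :: T ∧ S.length = j ∧ T.length = n - j := by
  refine ⟨(List.ofFn id).take j, (List.ofFn id).drop (j + 1), ?_, ?_, ?_, ?_⟩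
  · refine List.ext_getElem (by simp; omega) fun i h1 h2 => ?_
    simp only [List.length_ofFn] at h1
    rw [List.getElem_append]
    split_ifs with h
    · simp at h
      simp [Fin.succAbove, Fin.lt_def, h, -List.ofFn_succ]
    · simp at h
      have : ¬ i < (j : ℕ) := by omega
      simp [Fin.succAbove, Fin.lt_def, this, Fin.ext_iff, -List.ofFn_succ]
      omega
  · conv_lhs => rw [← List.take_append_drop j (List.ofFn id)]
    rw [List.drop_eq_getElem_cons (by simp; omega)]
    simp [-List.ofFn_succ]
  · simp [-List.ofFn_succ]
  · simp

theorem pairwise_ofFn {m : ℕ} {f : Fin m → ι} (hf : StrictMono f) :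
    (List.ofFn f).Pairwise (· < ·) := List.pairwise_ofFn.2 fun _ _ h => hf h

theorem sort_image {m : ℕ} {f : Fin m → ι} (hf : StrictMono f) :
    (univ.image f).sort (· ≤ ·) = List.ofFn f := by
  have h : univ.image f = (List.ofFn f).toFinset := by ext; simp [List.mem_ofFn]
  rw [h]
  exact (List.toFinset_sort _ (List.nodup_ofFn.2 hf.injective)).2
    ((pairwise_ofFn hf).imp le_of_lt)

/-! ### The quantum adjugate -/

section Adjugate

variable {n : ℕ} {q : Kˣ} {X : Matrix (Fin (n + 1)) (Fin (n + 1)) R}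

local notation "ε" => (-((q⁻¹ : Kˣ) : K))

theorem image_succAbove (k : Fin (n + 1)) : univ.image k.succAbove = univ.erase k := by
  ext i
  simp

/-- `X` with row `j` deleted and row `i` put on top. -/
theorem QRel_s4.rowDet_cons_succAbove (h : QRel_s4 q X) (i j : Fin (n + 1)) :
    rowDet ε X (i :: List.ofFn j.succAbove) univ =
      if i = j then ε ^ (j : ℕ) • rowDet ε X (List.ofFn id) univ else 0 := by
  split_ifs with hij
  · subst hij
    obtain ⟨S, T, h1, h2, h3, -⟩ := ofFn_succAbove i
    have hp := pairwise_ofFn (strictMono_id (α := Fin (n + 1)))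
    rw [h2, List.pairwise_append] at hp
    rw [h1, h2, h.rowDet_move_right i S T (fun b hb => hp.2.2 b hb i (by simp)), h3]
  · exact h.rowDet_cons_of_mem (pairwise_ofFn (Fin.strictMono_succAbove j))
      (by simpa [List.mem_ofFn, Fin.exists_succAbove_eq_iff] using hij) _

/-- `X` with row `i` deleted and row `j` put at the bottom. -/
theorem QRel_s4.rowDet_succAbove_concat (h : QRel_s4 q X) (i j : Fin (n + 1)) :
    rowDet ε X (List.ofFn i.succAbove ++ [j]) univ =
      if i = j then ε ^ (n - i : ℕ) • rowDet ε X (List.ofFn id) univ else 0 := by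
  split_ifs with hij
  · subst hij
    obtain ⟨S, T, h1, h2, -, h3⟩ := ofFn_succAbove i
    have hp := pairwise_ofFn (strictMono_id (α := Fin (n + 1)))
    rw [h2, List.pairwise_append, List.pairwise_cons] at hp
    rw [h1, h2, h.rowDet_move_left i S T hp.2.1.1, h3]
  · exact h.rowDet_concat_of_mem (pairwise_ofFn (Fin.strictMono_succAbove i))
      (by simpa [List.mem_ofFn, Fin.exists_succAbove_eq_iff] using Ne.symm hij) _

theorem unit_zpow_mul (z : ℤ) (r : R) :
    (((-Units.map (algebraMap K R : K →* R) q) ^ z : Rˣ) : R) * r = (((-q) ^ z : Kˣ) : K) • r := by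
  have : -Units.map (algebraMap K R : K →* R) q = Units.map (algebraMap K R : K →* R) (-q) := by
    ext; simp
  rw [this, ← map_zpow, Algebra.smul_def]
  rfl

theorem neg_inv_pow (k : ℕ) : ε ^ k = (((-q) ^ (-(k : ℤ)) : Kˣ) : K) := by
  rw [zpow_neg, zpow_natCast, ← inv_pow, Units.val_pow_eq_pow_val, inv_neg, Units.val_neg]

theorem qdet_minor (j k : Fin (n + 1)) :
    qdet (Units.map (algebraMap K R : K →* R) q) (X.submatrix j.succAbove k.succAbove) =
      rowDet ε X (List.ofFn j.succAbove) (univ.erase k) := by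
  rw [qdet_submatrix (p := ε) _ (Algebra.commutes _) X _ _ (Fin.strictMono_succAbove k),
    image_succAbove]
  simp [inv_neg]

theorem qdet_eq_rowDet :
    qdet (Units.map (algebraMap K R : K →* R) q) X = rowDet ε X (List.ofFn id) univ := by
  have := qdet_submatrix (p := ε) (q := Units.map (algebraMap K R : K →* R) q) (by simp [inv_neg])
    (Algebra.commutes _) X id _ (strictMono_id (α := Fin (n + 1)))
  rwa [image_id, Matrix.submatrix_id_id] at this

theorem QRel_s4.mul_qAdjugate (h : QRel_s4 q X) :
    X * qAdjugate (Units.map (algebraMap K R : K →* R) q) X =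
      qdet (Units.map (algebraMap K R : K →* R) q) X • 1 := by
  ext i j
  have key := h.rowDet_cons_succAbove i j
  rw [rowDet] at key
  rw [Matrix.mul_apply, Matrix.smul_apply, Matrix.one_apply, qdet_eq_rowDet]
  have : ∀ k, X i k * qAdjugate (Units.map (algebraMap K R : K →* R) q) X k j =
      (((-q) ^ (j : ℤ) : Kˣ) : K) • ε ^ #{c ∈ univ | c < k} •
        (X i k * rowDet ε X (List.ofFn j.succAbove) (univ.erase k)) := by
    intro k
    rw [qAdjugate, Matrix.of_apply, unit_zpow_mul, qdet_minor, mul_smul_comm, neg_inv_pow,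
      smul_smul,
      ← Units.val_mul, ← zpow_add, ← sub_eq_add_neg, card_fin_lt]
  rw [sum_congr rfl fun k _ => this k, ← smul_sum, key]
  split_ifs
  · rw [neg_inv_pow, smul_smul, ← Units.val_mul, ← zpow_add]
    simp
  · simp

theorem QRel_s4.qAdjugate_mul (h : QRel_s4 q X) :
    qAdjugate (Units.map (algebraMap K R : K →* R) q) X * X =
      qdet (Units.map (algebraMap K R : K →* R) q) X • 1 := by
  ext i j
  have key := h.transpose.rowDet_succAbove_concat i j
  rw [rowDet_concat _ _ _ _ _ (by simp)] at key
  have hdet : rowDet ε X.transpose (List.ofFn id) univ = rowDet ε X (List.ofFn id) univ := by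
    have := h.rowDet_transpose ε _ univ univ rfl rfl
    rw [← image_id (s := univ), sort_image strictMono_id, image_id] at this
    exact this.symm
  have hminor : ∀ k, rowDet ε X (List.ofFn k.succAbove) (univ.erase i) =
      rowDet ε X.transpose (List.ofFn i.succAbove) (univ.erase k) := by
    intro k
    have := h.rowDet_transpose ε n (univ.image k.succAbove) (univ.image i.succAbove)
      (by rw [card_image_of_injective _ Fin.succAbove_right_injective, card_fin])
      (by rw [card_image_of_injective _ Fin.succAbove_right_injective, card_fin])
    rwa [sort_image (Fin.strictMono_succAbove k), sort_image (Fin.strictMono_succAbove i),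
      image_succAbove, image_succAbove] at this
  rw [Matrix.mul_apply, Matrix.smul_apply, Matrix.one_apply, qdet_eq_rowDet]
  have : ∀ k, qAdjugate (Units.map (algebraMap K R : K →* R) q) X i k * X k j =
      (((-q) ^ (n - i : ℤ) : Kˣ) : K) • ε ^ #{c ∈ univ | k < c} •
        (rowDet ε X.transpose (List.ofFn i.succAbove) (univ.erase k) * X.transpose j k) := by
    intro k
    rw [qAdjugate, Matrix.of_apply, unit_zpow_mul, qdet_minor, smul_mul_assoc, neg_inv_pow,
      smul_smul,
      ← Units.val_mul, ← zpow_add, hminor, Matrix.transpose_apply, card_fin_gt]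
    have : (k : ℤ) - i = n - i + -((n - k : ℕ) : ℤ) := by omega
    rw [this]
  rw [sum_congr rfl fun k _ => this k, ← smul_sum, key]
  split_ifs
  · rw [neg_inv_pow, smul_smul, ← Units.val_mul, ← zpow_add, hdet]
    have : (n - i : ℤ) + -((n - i : ℕ) : ℤ) = 0 := by omega
    rw [this]
    simp
  · simp

end Adjugate

end Expansion

/-- `S(X)·X = X·S(X) = (det_q X)·I` for a `q`-generic matrix `X`. -/
theorem stmt4 {R : Type*} [Ring R] (q : Rˣ) (hq : ∀ r : R, (q : R) * r = r * (q : R))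
    {n : ℕ} (X : Matrix (Fin (n+1)) (Fin (n+1)) R) (hX : qGeneric q X) :
    qAdjugate q X * X = qdet q X • (1 : Matrix (Fin (n+1)) (Fin (n+1)) R) ∧
    X * qAdjugate q X = qdet q X • (1 : Matrix (Fin (n+1)) (Fin (n+1)) R) := by
  have hcen : (q : R) ∈ Subring.center R := Subring.mem_center_iff.2 fun r => (hq r).symm
  have hcen' : ((q⁻¹ : Rˣ) : R) ∈ Subring.center R := Subring.mem_center_iff.2 fun r =>
    ((show Commute (q : R) r from hq r).units_inv_left).eq.symm
  let c : (Subring.center R)ˣ := ⟨⟨q, hcen⟩, ⟨_, hcen'⟩, by ext; simp, by ext; simp⟩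
  -- `q` is regarded as a unit of the centre of `R`, over which `R` is an algebra.
  let _ : Algebra (Subring.center R) R :=
    { (Subring.center R).subtype with
      smul := fun a r => a * r
      algebraMap := (Subring.center R).subtype
      commutes' := fun a r => (Subring.mem_center_iff.1 a.2 r).symm
      smul_def' := fun a r => rfl }
  have hc : Units.map (algebraMap (Subring.center R) R : _ →* R) c = q := by ext; rfl
  obtain ⟨h1, h2, h3, h4⟩ := hX
  have h : QRel_s4 c X := ⟨h1, h2, h3, h4⟩
  rw [← hc]
  exact ⟨h.qAdjugate_mul, h.mul_qAdjugate⟩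
end

section
/- Let R be a ring with a central invertible element q and let X be an n×d q-generic matrix over R. Let I = {i_1 < i_2 < ⋯ < i_{d+1}} be a subset of {1,…,n} of size d+1 and let J = (j_1,…,j_{d−1}) be a tuple of d−1 elements of {1,…,n}. Then the quantum minors of X satisfy the quantized Young symmetry (quantum Plücker) relation: ∑_{λ=1}^{d+1} (−q)^{−(d+1−λ)} · [I∖{i_λ}] · [i_λ|J] = 0, where [I∖{i_λ}] is the quantum minor on rows I∖{i_λ} in increasing order and [i_λ|J] is the quantum minor on the row tuple (i_λ, j_1,…,j_{d−1}) in that order. -/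
/-- The quantum minor of a row tuple `K`: `det_q` of the matrix whose `(s,t)` entry is
`X (K s) t` (rows `K` of `X` in the given order, first `k` columns). -/
def qminorT {R : Type*} [Ring R] {n d : ℕ} (q : Rˣ) (X : Matrix (Fin n) (Fin d) R)
    {k : ℕ} (hk : k ≤ d) (K : Fin k → Fin n) : R :=
  qdet q (Matrix.of fun s t => X (K s) (Fin.castLE hk t))

/-- The quantum minor `[K]` of a finite row set `K` (rows in increasing order). -/
def qminor {R : Type*} [Ring R] {n m : ℕ} (q : Rˣ) (X : Matrix (Fin n) (Fin m) R)
    {k : ℕ} (hk : k ≤ m) (K : Finset (Fin n)) (hK : K.card = k) : R :=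
  qdet q (Matrix.of fun s t => X (K.orderIsoOfFin hK s) (Fin.castLE hk t))

section QuantumPlucker

variable {R : Type*} [Ring R] {n d : ℕ}

theorem qpow_comm {q : Rˣ} (hq : ∀ x : R, (q : R) * x = x * (q : R)) (z : ℤ) (x : R) :
    (((-q) ^ z : Rˣ) : R) * x = x * (((-q) ^ z : Rˣ) : R) := by
  refine Commute.units_zpow_left (u := -q) ?_ z
  have h : Commute (q : R) x := hq x
  simpa using h.neg_left

/-! ### Row order and column order -/

theorem prod_orderedInsert_of_commute {α : Type*} (r : α → α → Prop) [DecidableRel r]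
    (f : α → R) (a : α) (l : List α) (h : ∀ b ∈ l, ¬ r a b → Commute (f a) (f b)) :
    ((l.orderedInsert r a).map f).prod = f a * (l.map f).prod := by
  induction l with
  | nil => simp
  | cons b l ih =>
    rw [List.orderedInsert_cons]
    split_ifs with hab
    · simp
    · have hc : Commute (f a) (f b) := h b (by simp) hab
      rw [List.map_cons, List.prod_cons, ih fun c hc => h c (by simp [hc]), List.map_cons,
        List.prod_cons, ← mul_assoc, ← mul_assoc, hc.eq]

/-- Sorting a noncommutative product leaves it unchanged, provided every pair of factors that is
out of order commutes. -/
theorem prod_insertionSort_of_commute {α : Type*} (r : α → α → Prop) [DecidableRel r]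
    (f : α → R) (l : List α) (h : l.Pairwise fun a b => ¬ r a b → Commute (f a) (f b)) :
    ((l.insertionSort r).map f).prod = (l.map f).prod := by
  induction l with
  | nil => simp
  | cons a l ih =>
    rw [List.pairwise_cons] at h
    rw [List.insertionSort_cons, prod_orderedInsert_of_commute, ih h.2, List.map_cons,
      List.prod_cons]
    intro b hb
    exact h.1 b ((List.mem_insertionSort r).1 hb)

theorem tupleInv_symm {m : ℕ} (σ : Equiv.Perm (Fin m)) :
    tupleInv (fun i => σ.symm i) = tupleInv (fun i => σ i) := by
  unfold tupleInv
  refine Finset.card_bij' (fun p _ => (σ.symm p.2, σ.symm p.1)) (fun p _ => (σ p.2, σ p.1))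
    ?_ ?_ ?_ ?_ <;> simp +contextual

/-- The products over a permutation in row order and in column order agree: only factors
`x_{i,l}`, `x_{j,k}` with `i < j`, `k < l` have to be exchanged, and these commute. -/
theorem prod_rows_eq_prod_cols {m : ℕ} {q : Rˣ} {A : Matrix (Fin m) (Fin m) R}
    (hA : qGeneric q A) (σ : Equiv.Perm (Fin m)) :
    (List.ofFn fun i => A i (σ i)).prod = (List.ofFn fun i => A (σ.symm i) i).prod := by
  have hsort : (List.finRange m).insertionSort (fun a b => σ a ≤ σ b)
      = List.ofFn fun i => σ.symm i := by
    refine List.Perm.eq_of_pairwise (le := fun a b => σ a ≤ σ b)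
      (fun a b _ _ h1 h2 => σ.injective (le_antisymm h1 h2)) ?_ ?_ ?_
    · have : IsTrans (Fin m) (fun a b => σ a ≤ σ b) := ⟨fun a b c h1 h2 => le_trans h1 h2⟩
      have : Std.Total (fun a b => σ a ≤ σ b) := ⟨fun a b => le_total (σ a) (σ b)⟩
      exact List.pairwise_insertionSort _ _
    · rw [List.pairwise_ofFn]
      intro i j hij
      simpa using hij.le
    · refine (List.perm_insertionSort _ _).trans ?_
      rw [← List.ofFn_id]
      exact (Equiv.Perm.ofFn_comp_perm σ.symm id).symm
  have h := prod_insertionSort_of_commute (fun a b => σ a ≤ σ b) (fun i => A i (σ i))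
    (List.finRange m) (by
      rw [← List.ofFn_id, List.pairwise_ofFn]
      intro i j hij hn
      exact (hA.2.2.1 i j (σ j) (σ i) hij (not_le.1 hn)).symm)
  rw [hsort, List.map_ofFn] at h
  rw [List.ofFn_eq_map, ← h]
  simp [Function.comp_def]

theorem qdet_eq_sum_cols {m : ℕ} {q : Rˣ} {A : Matrix (Fin m) (Fin m) R} (hA : qGeneric q A) :
    qdet q A = ∑ σ : Equiv.Perm (Fin m),
      (((-q) ^ (-(tupleInv fun i => σ i : ℤ)) : Rˣ) : R) *
        (List.ofFn fun i => A (σ i) i).prod := by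
  unfold qdet
  refine Fintype.sum_equiv (Equiv.inv (Equiv.Perm (Fin m))) _ _ fun σ => ?_
  rw [prod_rows_eq_prod_cols hA σ]
  simp only [Equiv.inv_apply, Equiv.Perm.inv_def, tupleInv_symm]

/-! ### Column determinants -/

/-- The column determinant on the row set `S`, for the columns listed (from last to first) in the
given list, defined by expansion along the last column. It is a quantum determinant when the list
has `S.card` entries; the columns may repeat. -/
def colDet (q : Rˣ) (X : Matrix (Fin n) (Fin d) R) : List (Fin d) → Finset (Fin n) → R
  | [], _ => 1
  | c :: cs, S => ∑ i ∈ S, (((-q) ^ (-((S.filter (i < ·)).card : ℤ)) : Rˣ) : R) *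
      (colDet q X cs (S.erase i) * X i c)

theorem tupleInv_snoc {m : ℕ} {α : Type*} [LinearOrder α] (g : Fin m → α) (i : α) :
    tupleInv (Fin.snoc g i : Fin (m + 1) → α)
      = tupleInv g + (Finset.univ.filter fun k => i < g k).card := by
  unfold tupleInv
  simp only [Finset.card_filter, Fintype.sum_prod_type, Fin.sum_univ_castSucc, Fin.snoc_castSucc,
    Fin.snoc_last, Fin.castSucc_lt_castSucc_iff, Fin.castSucc_lt_last, lt_irrefl, true_and,
    false_and, if_false, add_zero, Finset.sum_add_distrib]
  have : ∀ x : Fin m, ¬ Fin.last m < x.castSucc := fun x => not_lt.2 (Fin.castSucc_lt_last x).le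
  simp [this]

/-- The recursively defined `colDet` is the sum over all enumerations of the row set. -/
theorem colDet_eq_sum (q : Rˣ)
    (X : Matrix (Fin n) (Fin d) R) {m : ℕ} (c : Fin m → Fin d) (S : Finset (Fin n))
    (hS : S.card = m) :
    colDet q X (List.ofFn c).reverse S =
      ∑ f : Fin m → Fin n, if Function.Injective f ∧ ∀ k, f k ∈ S then
        (((-q) ^ (-(tupleInv f : ℤ)) : Rˣ) : R) * (List.ofFn fun k => X (f k) (c k)).prod
      else 0 := by
  induction m generalizing S with
  | zero =>
    simp [colDet, tupleInv, Function.injective_of_subsingleton]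
  | succ m ih =>
    rw [List.ofFn_succ', List.concat_eq_append, List.reverse_append, List.reverse_singleton,
      List.singleton_append, colDet,
      ← (Fin.snocEquiv fun _ : Fin (m + 1) => Fin n).sum_comp, Fintype.sum_prod_type,
      ← Finset.sum_subset (Finset.subset_univ S)]
    · refine Finset.sum_congr rfl fun i hi => ?_
      have hc : (S.erase i).card = m := by rw [Finset.card_erase_of_mem hi, hS]; rfl
      rw [ih _ _ hc, Finset.sum_mul, Finset.mul_sum]
      refine Finset.sum_congr rfl fun g _ => ?_
      have hiff : (Function.Injective (Fin.snoc g i : Fin (m + 1) → Fin n) ∧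
          ∀ k, (Fin.snoc g i : Fin (m + 1) → Fin n) k ∈ S) ↔
          (Function.Injective g ∧ ∀ k, g k ∈ S.erase i) := by
        simp only [Fin.snoc_injective_iff, Fin.forall_fin_succ', Fin.snoc_castSucc, Fin.snoc_last,
          Finset.mem_erase, Set.mem_range, not_exists, forall_and]
        tauto
      change _ = if Function.Injective (Fin.snoc g i : Fin (m + 1) → Fin n) ∧
        ∀ k, (Fin.snoc g i : Fin (m + 1) → Fin n) k ∈ S then
        (((-q) ^ (-(tupleInv (Fin.snoc g i : Fin (m + 1) → Fin n) : ℤ)) : Rˣ) : R) *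
          (List.ofFn fun k => X ((Fin.snoc g i : Fin (m + 1) → Fin n) k) (c k)).prod else 0
      by_cases hg : Function.Injective g ∧ ∀ k, g k ∈ S.erase i
      · rw [if_pos hg, if_pos (hiff.2 hg)]
        -- `g` enumerates all of `S.erase i`, so the new inversions are the elements above `i`.
        have himg : Finset.univ.image g = S.erase i := by
          refine Finset.eq_of_subset_of_card_le ?_ ?_
          · intro x hx
            obtain ⟨k, -, rfl⟩ := Finset.mem_image.1 hx
            exact hg.2 k
          · rw [hc, Finset.card_image_of_injective _ hg.1]; simp
        have hcard : (Finset.univ.filter fun k => i < g k).card = (S.filter (i < ·)).card := by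
          rw [← Finset.card_image_of_injective _ hg.1]
          congr 1
          ext x
          have hx : x ∈ Finset.univ.image g ↔ x ∈ S.erase i := by rw [himg]
          simp only [Finset.mem_image, Finset.mem_univ, true_and, Finset.mem_erase,
            Finset.mem_filter] at hx ⊢
          constructor
          · rintro ⟨k, hk, rfl⟩
            exact ⟨(hx.1 ⟨k, rfl⟩).2, hk⟩
          · rintro ⟨hxS, hix⟩
            obtain ⟨k, rfl⟩ := hx.2 ⟨hix.ne', hxS⟩
            exact ⟨k, hix, rfl⟩
        rw [tupleInv_snoc, hcard, List.ofFn_succ', List.concat_eq_append, List.prod_append,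
          List.prod_singleton]
        simp only [Fin.snoc_castSucc, Fin.snoc_last]
        rw [Nat.cast_add, neg_add, add_comm, zpow_add, Units.val_mul]
        simp only [mul_assoc]
      · rw [if_neg hg, if_neg (fun h => hg (hiff.1 h)), zero_mul, mul_zero]
    · intro i _ hi
      refine Finset.sum_eq_zero fun g _ => if_neg fun h => hi ?_
      simpa using h.2 (Fin.last m)

/-- The quantum minor on a row set is the column determinant on all columns. -/
theorem qminor_eq_colDet {q : Rˣ}
    {X : Matrix (Fin n) (Fin d) R} (hX : qGeneric q X) (S : Finset (Fin n)) (hS : S.card = d) :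
    qminor q X (le_refl d) S hS = colDet q X (List.ofFn fun k : Fin d => k).reverse S := by
  have hgen : qGeneric q (Matrix.of fun s t => X (S.orderIsoOfFin hS s) (Fin.castLE le_rfl t)) := by
    have hlt : ∀ {i j : Fin d}, i < j → (S.orderIsoOfFin hS i : Fin n) < S.orderIsoOfFin hS j :=
      fun h => (S.orderIsoOfFin hS).strictMono h
    exact ⟨fun k i j h => hX.1 _ _ _ h, fun i j k h => hX.2.1 _ _ _ (hlt h),
      fun i j k l h h' => hX.2.2.1 _ _ _ _ (hlt h) h',
      fun i j k l h h' => hX.2.2.2 _ _ _ _ (hlt h) h'⟩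
  rw [colDet_eq_sum q X _ S hS, qminor, qdet_eq_sum_cols hgen, ← Finset.sum_filter]
  refine Finset.sum_bij (fun σ _ k => (S.orderIsoOfFin hS (σ k) : Fin n)) ?_ ?_ ?_ ?_
  · intro σ _
    simp only [Finset.mem_filter, Finset.mem_univ, true_and]
    refine ⟨fun a b h => ?_, fun k => (S.orderIsoOfFin hS (σ k)).2⟩
    exact σ.injective ((S.orderIsoOfFin hS).injective (Subtype.ext h))
  · intro σ _ τ _ h
    ext1 k
    exact (S.orderIsoOfFin hS).injective (Subtype.ext (congrFun h k))
  · intro f hf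
    simp only [Finset.mem_filter, Finset.mem_univ, true_and] at hf
    have hinj : Function.Injective fun k => (S.orderIsoOfFin hS).symm ⟨f k, hf.2 k⟩ := by
      intro a b h
      have := (S.orderIsoOfFin hS).symm.injective h
      exact hf.1 (congrArg Subtype.val this)
    refine ⟨Equiv.ofBijective _ (Finite.injective_iff_bijective.1 hinj), Finset.mem_univ _, ?_⟩
    funext k
    simp
  · intro σ _
    have : tupleInv (fun i => σ i) = tupleInv fun k => (S.orderIsoOfFin hS (σ k) : Fin n) := by
      simp [tupleInv]
    rw [this]
    simp

/-! ### Exchanging columns -/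

/-- Two-column expansion: the two orders of removing rows `a < b` combine to a `2 × 2` quantum
determinant. -/
theorem colDet_cons_cons {q : Rˣ} (hq : ∀ x : R, (q : R) * x = x * (q : R))
    (X : Matrix (Fin n) (Fin d) R) (u v : Fin d) (cs : List (Fin d)) (S : Finset (Fin n)) :
    colDet q X (v :: u :: cs) S = ∑ a ∈ S, ∑ b ∈ S, if a < b then
      (((-q) ^ (-((S.filter (b < ·)).card : ℤ) + -((S.filter (a < ·)).card : ℤ) + 1) : Rˣ) : R) *
        (colDet q X cs ((S.erase a).erase b) *
          (X a u * X b v - ((q⁻¹ : Rˣ) : R) * (X b u * X a v))) else 0 := by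
  have key : colDet q X (v :: u :: cs) S = ∑ i ∈ S, ∑ j ∈ S, if i ≠ j then
      (((-q) ^ (-((S.filter (i < ·)).card : ℤ)
        + -(((S.erase i).filter (j < ·)).card : ℤ)) : Rˣ) : R) *
        (colDet q X cs ((S.erase i).erase j) * (X j u * X i v)) else 0 := by
    rw [colDet]
    refine Finset.sum_congr rfl fun i hi => ?_
    rw [colDet, ← Finset.sum_filter]
    have : S.filter (fun j => i ≠ j) = S.erase i := by
      ext j; simp [and_comm, eq_comm]
    rw [this, Finset.sum_mul, Finset.mul_sum]
    refine Finset.sum_congr rfl fun j hj => ?_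
    rw [zpow_add, Units.val_mul]
    simp only [mul_assoc]
  have split : ∀ F : Fin n → Fin n → R, (∑ i ∈ S, ∑ j ∈ S, if i ≠ j then F i j else 0)
      = ∑ a ∈ S, ∑ b ∈ S, if a < b then F b a + F a b else 0 := by
    intro F
    have h1 : ∀ i j, (if i ≠ j then F i j else 0)
        = (if j < i then F i j else 0) + (if i < j then F i j else 0) := by
      intro i j
      rcases lt_trichotomy i j with h | h | h
      · simp [h, h.ne, h.not_gt]
      · simp [h]
      · simp [h, h.ne', h.not_gt]
    have h2 : ∀ i j, (if i < j then F j i + F i j else 0)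
        = (if i < j then F j i else 0) + (if i < j then F i j else 0) := by
      intro i j; split_ifs <;> simp
    simp only [h1, h2, Finset.sum_add_distrib]
    rw [Finset.sum_comm]
  rw [key, split]
  refine Finset.sum_congr rfl fun a ha => Finset.sum_congr rfl fun b hb => ?_
  split_ifs with hab
  · have hA : (((S.erase b).filter (a < ·)).card : ℤ) = ((S.filter (a < ·)).card : ℤ) - 1 := by
      rw [Finset.filter_erase, Finset.card_erase_of_mem (by simp [hb, hab])]
      have : 0 < (S.filter (a < ·)).card := Finset.card_pos.2 ⟨b, by simp [hb, hab]⟩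
      omega
    have hB : (S.erase a).filter (b < ·) = S.filter (b < ·) := by
      rw [Finset.filter_erase, Finset.erase_eq_of_notMem (by simp [hab.le])]
    rw [hA, hB, Finset.erase_right_comm (a := b) (b := a)]
    set B : ℤ := ((S.filter (b < ·)).card : ℤ)
    set A : ℤ := ((S.filter (a < ·)).card : ℤ)
    have e1 : -B + -(A - 1) = -B + -A + 1 := by ring
    have e2 : (((-q) ^ (-A + -B) : Rˣ) : R)
        = -((((-q) ^ (-B + -A + 1) : Rˣ) : R) * ((q⁻¹ : Rˣ) : R)) := by
      have : (-q) ^ (-A + -B) = (-q) ^ (-B + -A + 1) * (-q)⁻¹ := by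
        rw [← zpow_sub_one]; congr 1; ring
      rw [this, Units.val_mul, inv_neg, Units.val_neg, mul_neg]
    have hqi : ∀ x : R, ((q⁻¹ : Rˣ) : R) * x = x * ((q⁻¹ : Rˣ) : R) := fun x =>
      (Commute.units_inv_left (u := q) (hq x)).eq
    rw [e1, e2, mul_sub, mul_sub, sub_eq_add_neg, neg_mul, mul_assoc (Units.val _) (Units.val _),
      ← mul_assoc ((q⁻¹ : Rˣ) : R) (colDet _ _ _ _), hqi (colDet _ _ _ _),
      mul_assoc (colDet _ _ _ _)]
  · rfl

/-- Column determinants with a repeated column vanish: move the two copies next to each other. -/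
theorem colDet_cons_eq_zero {q : Rˣ} (hq : ∀ x : R, (q : R) * x = x * (q : R))
    {X : Matrix (Fin n) (Fin d) R} (hX : qGeneric q X) (v : Fin d) (cs : List (Fin d))
    (hv : v ∈ cs) (S : Finset (Fin n)) : colDet q X (v :: cs) S = 0 := by
  have hqi : ∀ x : R, ((q⁻¹ : Rˣ) : R) * x = x * ((q⁻¹ : Rˣ) : R) := fun x =>
    (Commute.units_inv_left (u := q) (hq x)).eq
  induction cs generalizing S with
  | nil => simp at hv
  | cons u cs ih =>
    -- Exchanging adjacent columns only rescales the determinant.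
    have swap : ∀ t : R, (∀ x : R, t * x = x * t) →
        (∀ a b : Fin n, a < b → X a u * X b v - ((q⁻¹ : Rˣ) : R) * (X b u * X a v)
          = t * (X a v * X b u - ((q⁻¹ : Rˣ) : R) * (X b v * X a u))) →
        colDet q X (v :: u :: cs) S = t * colDet q X (u :: v :: cs) S := by
      intro t ht h
      rw [colDet_cons_cons hq, colDet_cons_cons hq, Finset.mul_sum]
      refine Finset.sum_congr rfl fun a _ => ?_
      rw [Finset.mul_sum]
      refine Finset.sum_congr rfl fun b _ => ?_
      split_ifs with hab
      · rw [h a b hab]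
        simp only [← mul_assoc]
        rw [ht (Units.val _), mul_assoc (Units.val _) t, ht (colDet _ _ _ _), ← mul_assoc]
      · simp
    have move : v ∈ cs → colDet q X (u :: v :: cs) S = 0 := fun h => by
      rw [colDet]
      exact Finset.sum_eq_zero fun i _ => by rw [ih h, zero_mul, mul_zero]
    rcases lt_trichotomy u v with huv | huv | huv
    · rw [swap (-q) (fun x => by rw [neg_mul, mul_neg, hq]) ?_,
        move ((List.mem_cons.1 hv).resolve_left huv.ne'), mul_zero]
      intro a b hab
      have h3 := hX.2.2.1 a b u v hab huv
      have h4 := hX.2.2.2 a b u v hab huv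
      rw [h3, h4]
      simp only [mul_add, mul_sub, sub_mul, neg_mul, ← mul_assoc, Units.mul_inv, one_mul]
      simp only [mul_assoc]
      abel
    · subst huv
      rw [colDet_cons_cons hq]
      refine Finset.sum_eq_zero fun a _ => Finset.sum_eq_zero fun b _ => ?_
      split_ifs with hab
      · rw [hX.2.1 a b u hab, Units.inv_mul_cancel_left, sub_self, mul_zero, mul_zero]
      · rfl
    · rw [swap (-((q⁻¹ : Rˣ) : R)) (fun x => by rw [neg_mul, mul_neg, hqi]) ?_,
        move ((List.mem_cons.1 hv).resolve_left huv.ne), mul_zero]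
      intro a b hab
      have h3 := hX.2.2.1 a b v u hab huv
      have h4 := hX.2.2.2 a b v u hab huv
      rw [h3, h4]
      simp only [mul_add, mul_sub, sub_mul, neg_mul, ← mul_assoc, Units.inv_mul, one_mul]
      abel

end QuantumPlucker

/-- The quantized Young symmetry (quantum Plücker) relation for `r = 1`:
for `I = {i_1 < ⋯ < i_{d+1}}` and a `(d-1)`-tuple `J`,
`∑_{λ=1}^{d+1} (-q)^{-(d+1-λ)} [I∖{i_λ}]·[i_λ|J] = 0`. -/
theorem stmt8 {R : Type*} [Ring R] (q : Rˣ) (hq : ∀ x : R, (q : R) * x = x * (q : R))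
    {n d : ℕ} (hd : 1 ≤ d) (X : Matrix (Fin n) (Fin d) R) (hX : qGeneric q X)
    (I : Finset (Fin n)) (hI : I.card = d + 1) (J : Fin (d - 1) → Fin n) :
    ∑ s : Fin (d + 1),
      (((-q) ^ (-((d : ℤ) - (s.val : ℤ))) : Rˣ) : R) *
        qminor q X (le_refl d) (I.erase (I.orderIsoOfFin hI s))
          (by rw [Finset.card_erase_of_mem (I.orderIsoOfFin hI s).2, hI]; omega) *
        qminorT q X (le_refl d)
          (fun x : Fin d => Fin.append (fun _ : Fin 1 => ((I.orderIsoOfFin hI s : Fin n))) J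
            (Fin.cast (by omega : d = 1 + (d - 1)) x))
      = 0 := by
  have hlast : ∀ c : Fin d, ∑ s : Fin (d + 1),
      (((-q) ^ (-((d : ℤ) - (s.val : ℤ))) : Rˣ) : R) *
        (colDet q X (List.ofFn fun k : Fin d => k).reverse (I.erase (I.orderIsoOfFin hI s)) *
          X (I.orderIsoOfFin hI s) c) = 0 := by
    intro c
    rw [← colDet_cons_eq_zero hq hX c (List.ofFn fun k : Fin d => k).reverse (by simp) I, colDet,
      ← Finset.sum_coe_sort I]
    refine Fintype.sum_equiv (I.orderIsoOfFin hI).toEquiv _ _ fun s => ?_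
    have hcard : (I.filter ((I.orderIsoOfFin hI s : Fin n) < ·)).card = d - s.val := by
      have : I.filter ((I.orderIsoOfFin hI s : Fin n) < ·)
          = (Finset.Ioi s).map (I.orderEmbOfFin hI).toEmbedding := by
        ext x
        simp only [Finset.mem_filter, Finset.mem_map, Finset.mem_Ioi]
        constructor
        · rintro ⟨hx, hlt⟩
          refine ⟨(I.orderIsoOfFin hI).symm ⟨x, hx⟩, ?_, ?_⟩
          · rw [(I.orderIsoOfFin hI).lt_symm_apply]; exact hlt
          · change ((I.orderIsoOfFin hI ((I.orderIsoOfFin hI).symm ⟨x, hx⟩) : I) : Fin n) = x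
            simp
        · rintro ⟨t, ht, rfl⟩
          exact ⟨Finset.orderEmbOfFin_mem _ _ _, (I.orderEmbOfFin hI).strictMono ht⟩
      rw [this, Finset.card_map, Fin.card_Ioi]
      omega
    have hs : ((d - s.val : ℕ) : ℤ) = (d : ℤ) - s.val := by have := s.isLt; omega
    change _ = (((-q) ^ (-((I.filter ((I.orderIsoOfFin hI s : Fin n) < ·)).card : ℤ)) : Rˣ) : R) * _
    rw [hcard, hs]
    rfl
  obtain ⟨e, rfl⟩ : ∃ e, d = e + 1 := ⟨d - 1, by omega⟩
  -- The first factor of each term of `[i|J]` is the only one that involves `i`.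
  have hexp : ∀ i : Fin n, qminorT q X (le_refl (e + 1))
      (fun x => Fin.append (fun _ : Fin 1 => i) J (Fin.cast (by omega) x))
      = ∑ σ : Equiv.Perm (Fin (e + 1)), (((-q) ^ (-(tupleInv fun i => σ i : ℤ)) : Rˣ) : R) *
          (X i (σ 0) * (List.ofFn fun k : Fin e => X (J k) (σ k.succ)).prod) := by
    intro i
    unfold qminorT qdet
    refine Finset.sum_congr rfl fun σ _ => ?_
    rw [List.ofFn_succ, List.prod_cons]
    have h0 : Fin.append (fun _ : Fin 1 => i) J (Fin.cast (by omega) (0 : Fin (e + 1))) = i :=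
      Fin.append_left (fun _ : Fin 1 => i) J 0
    have h1 : ∀ k : Fin e,
        Fin.append (fun _ : Fin 1 => i) J (Fin.cast (by omega) k.succ) = J k := by
      intro k
      have : Fin.cast (by omega) k.succ = Fin.natAdd 1 (k : Fin (e + 1 - 1)) := by
        ext; simp [add_comm]
      rw [this, Fin.append_right]
    simp only [Matrix.of_apply, h0, h1]
    rfl
  simp only [hexp, qminor_eq_colDet hX, Finset.mul_sum]
  rw [Finset.sum_comm]
  refine Finset.sum_eq_zero fun σ _ => ?_
  have h := congrArg (fun y => (((-q) ^ (-(tupleInv fun i => σ i : ℤ)) : Rˣ) : R) *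
    (y * (List.ofFn fun k : Fin e => X (J k) (σ k.succ)).prod)) (hlast (σ 0))
  simp only [zero_mul, mul_zero, Finset.sum_mul, Finset.mul_sum] at h
  rw [← h]
  refine Finset.sum_congr rfl fun s _ => ?_
  rw [← mul_assoc, ← qpow_comm hq]
  simp only [mul_assoc]
end

section
/- Let R be a ring, A = (a_{ij}) an n×n matrix over R, and B an n×n matrix with A·B = B·A = I_n. Suppose for a position (i,j) that the submatrix A^{ij} (obtained by deleting row i and column j of A) is invertible, so that the quasideterminant |A|_{ij} is defined. Then |A|_{ij} is invertible with two-sided inverse the (j,i) entry of B: |A|_{ij}·B_{ji} = 1 and B_{ji}·|A|_{ij} = 1. -/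
/-!
Split off row `i` and column `j` of `A`: write `a` for the corner entry `A i j`, `ξ` and `ζ` for
the rest of row `i` and of column `j`, and `D` for the remaining block, with inverse `C`.
If `β = B j i` and `b` is the rest of column `i` of `B`, then `A * B = 1` says
`ζ β + D b = 0` and `a β + ξ b = 1`. The first equation gives `b = -C ζ β`, and substituting it
in the second gives `(a - ξ C ζ) β = 1`. The other identity is obtained in the same way from
row `j` of `B * A = 1`.
-/

/-- The `(i,j)`-quasideterminant of `A`, computed with an explicitly given inverse `C`
of the submatrix `A^{ij}` (`A` with row `i` and column `j` deleted):
`|A|_{ij} = a_{ij} − ξ·(A^{ij})⁻¹·ζ`. -/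
def qdCore {R : Type*} [Ring R] {n : ℕ} (A : Matrix (Fin (n+1)) (Fin (n+1)) R)
    (i j : Fin (n+1)) (C : Matrix (Fin n) (Fin n) R) : R :=
  A i j - ∑ l : Fin n, ∑ k : Fin n, A i (j.succAbove l) * C l k * A (i.succAbove k) j

open scoped Matrix

/-- If `A` has a two-sided inverse `B` and the quasideterminant `|A|_{ij}`
is defined (i.e. `A^{ij}` has a two-sided inverse `C`), then `|A|_{ij}` is invertible with
two-sided inverse the `(j,i)` entry of `B`. -/
theorem stmt9 {R : Type*} [Ring R] {n : ℕ} (A B : Matrix (Fin (n+1)) (Fin (n+1)) R)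
    (hAB : A * B = 1) (hBA : B * A = 1) (i j : Fin (n+1))
    (C : Matrix (Fin n) (Fin n) R)
    (hC1 : A.submatrix i.succAbove j.succAbove * C = 1)
    (hC2 : C * A.submatrix i.succAbove j.succAbove = 1) :
    qdCore A i j C * B j i = 1 ∧ B j i * qdCore A i j C = 1 := by
  constructor
  · have hb : ∀ l, B (j.succAbove l) i = ∑ k, C l k * -(A (i.succAbove k) j * B j i) := by
      have h : A.submatrix i.succAbove j.succAbove *ᵥ (fun l => B (j.succAbove l) i)
          = fun k => -(A (i.succAbove k) j * B j i) := by
        funext k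
        have := congrFun (congrFun hAB (i.succAbove k)) i
        rw [Matrix.mul_apply, Fin.sum_univ_succAbove _ j,
          Matrix.one_apply_ne (Fin.succAbove_ne i k)] at this
        exact eq_neg_of_add_eq_zero_right this
      have h2 := congrArg (C *ᵥ ·) h
      simp only [Matrix.mulVec_mulVec, hC2, Matrix.one_mulVec] at h2
      exact fun l => congrFun h2 l
    have h1 := congrFun (congrFun hAB i) i
    rw [Matrix.mul_apply, Fin.sum_univ_succAbove _ j, Matrix.one_apply_eq] at h1
    rw [← h1, qdCore, sub_mul, sub_eq_add_neg]
    simp only [hb, Finset.sum_mul, Finset.mul_sum, mul_neg, Finset.sum_neg_distrib, mul_assoc]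
  · have hb : ∀ k, B j (i.succAbove k) = ∑ l, -(B j i * A i (j.succAbove l)) * C l k := by
      have h : (fun k => B j (i.succAbove k)) ᵥ* A.submatrix i.succAbove j.succAbove
          = fun l => -(B j i * A i (j.succAbove l)) := by
        funext l
        have := congrFun (congrFun hBA j) (j.succAbove l)
        rw [Matrix.mul_apply, Fin.sum_univ_succAbove _ i,
          Matrix.one_apply_ne (Fin.succAbove_ne j l).symm] at this
        exact eq_neg_of_add_eq_zero_right this
      have h2 := congrArg (· ᵥ* C) h
      simp only [Matrix.vecMul_vecMul, hC1, Matrix.vecMul_one] at h2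
      exact fun k => congrFun h2 k
    have h1 := congrFun (congrFun hBA j) j
    rw [Matrix.mul_apply, Fin.sum_univ_succAbove _ i, Matrix.one_apply_eq] at h1
    rw [← h1, qdCore, mul_sub, sub_eq_add_neg, Finset.sum_comm]
    simp only [hb, Finset.sum_mul, Finset.mul_sum, neg_mul, Finset.sum_neg_distrib, mul_assoc]
end

section
/- Let R be a ring and A = (a_{ij}) an n×n matrix over R. Fix a position (r,s) such that A^{rs} is invertible, so that |A|_{rs} is defined. Suppose column s of A is a right-linear combination of the other columns: there exist ρ_j ∈ R for j ≠ s with a_{ks} = ∑_{j≠s} a_{kj}·ρ_j for every row index k. Then |A|_{rs} = 0. -/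
/-- If column `s` of `A` is a right-linear combination of the other
columns and the quasideterminant `|A|_{rs}` is defined, then `|A|_{rs} = 0`. -/
theorem stmt10 {R : Type*} [Ring R] {n : ℕ} (A : Matrix (Fin (n+1)) (Fin (n+1)) R)
    (r s : Fin (n+1)) (C : Matrix (Fin n) (Fin n) R)
    (hC1 : A.submatrix r.succAbove s.succAbove * C = 1)
    (hC2 : C * A.submatrix r.succAbove s.succAbove = 1)
    (ρ : Fin n → R)
    (hρ : ∀ k : Fin (n+1), A k s = ∑ j : Fin n, A k (s.succAbove j) * ρ j) :
    qdCore A r s C = 0 := by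
  -- The deleted column is `ζ = A^{rs} ρ`, so `(A^{rs})⁻¹ ζ = ρ`.
  have hCζ : C.mulVec (fun k => A (r.succAbove k) s) = ρ := by
    have hζ : (fun k => A (r.succAbove k) s) =
        (A.submatrix r.succAbove s.succAbove).mulVec ρ := by
      funext k
      exact hρ (r.succAbove k)
    rw [hζ, Matrix.mulVec_mulVec, hC2, Matrix.one_mulVec]
  rw [qdCore, hρ r, sub_eq_zero]
  refine Finset.sum_congr rfl fun l _ => ?_
  rw [← congrFun hCζ l]
  simp only [Matrix.mulVec, dotProduct, Finset.mul_sum, mul_assoc]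
end

section
/- Let D be a division ring and A = (a_{ij}) an n×n matrix over D. Let i ≠ k be row indices and j ≠ l column indices, and suppose the quasideterminants |A|_{ij}, |A|_{kj}, |A^{kj}|_{il} and |A^{ij}|_{kl} are all defined (the relevant deleted submatrices are invertible) with |A^{kj}|_{il} ≠ 0 and |A^{ij}|_{kl} ≠ 0. Then the column homological relation holds: −(|A^{kj}|_{il})^{−1}·|A|_{ij} = (|A^{ij}|_{kl})^{−1}·|A|_{kj}. -/
theorem row_eq_qdCore_mul {R : Type*} [Ring R] {n : ℕ} (B : Matrix (Fin (n+1)) (Fin (n+1)) R)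
    (p q : Fin (n+1)) (C : Matrix (Fin n) (Fin n) R)
    (hC : C * B.submatrix p.succAbove q.succAbove = 1) (u : Fin (n+1) → R)
    (hu : ∀ r, ∑ c, B (p.succAbove r) c * u c = 0) :
    ∑ c, B p c * u c = qdCore B p q C * u q := by
  -- The entries of `u` away from `q` are determined by `u q`.
  have hsolve : (fun s => u (q.succAbove s)) =
      C.mulVec (fun r => -(B (p.succAbove r) q * u q)) := by
    have hS : (B.submatrix p.succAbove q.succAbove).mulVec (fun s => u (q.succAbove s)) =
        fun r => -(B (p.succAbove r) q * u q) := by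
      funext r
      have h := hu r
      rw [Fin.sum_univ_succAbove _ q] at h
      exact eq_neg_of_add_eq_zero_right h
    rw [← hS, Matrix.mulVec_mulVec, hC, Matrix.one_mulVec]
  have hentry : ∀ s, u (q.succAbove s) = -∑ r, C s r * (B (p.succAbove r) q * u q) := by
    intro s
    rw [congrFun hsolve s]
    simp [Matrix.mulVec, dotProduct]
  rw [Fin.sum_univ_succAbove _ q, qdCore, sub_mul, sub_eq_add_neg]
  simp only [hentry, Finset.sum_mul, Finset.mul_sum, mul_neg, Finset.sum_neg_distrib, mul_assoc]

theorem exists_vector_killed {R : Type*} [Ring R] {n : ℕ}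
    (B : Matrix (Fin (n+1)) (Fin (n+1)) R) (p q : Fin (n+1)) (C : Matrix (Fin n) (Fin n) R)
    (hC : B.submatrix p.succAbove q.succAbove * C = 1) :
    ∃ v : Fin (n+1) → R, v q = 1 ∧ ∀ r, ∑ c, B (p.succAbove r) c * v c = 0 := by
  refine ⟨q.insertNth 1 (C.mulVec fun r => -B (p.succAbove r) q), by simp, fun r => ?_⟩
  have hS : (B.submatrix p.succAbove q.succAbove).mulVec
      (C.mulVec fun r => -B (p.succAbove r) q) = fun r => -B (p.succAbove r) q := by
    rw [Matrix.mulVec_mulVec, hC, Matrix.one_mulVec]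
  have h := congrFun hS r
  simp only [Matrix.mulVec, dotProduct, Matrix.submatrix_apply] at h
  rw [Fin.sum_univ_succAbove _ q]
  simp only [Fin.insertNth_apply_same, Fin.insertNth_apply_succAbove, Matrix.mulVec, dotProduct, h]
  simp

/-- The column homological relations over a division ring:
`−(|A^{kj}|_{il})⁻¹·|A|_{ij} = (|A^{ij}|_{kl})⁻¹·|A|_{kj}` for rows `i ≠ k` and
columns `j ≠ l`, whenever all four quasideterminants are defined and the two inverted
ones are nonzero.  Here `i'`, `k'`, `l₁` are the indices of rows `i`, `k` and column `l`
inside the deleted matrices `A^{kj}`, `A^{ij}`, and `Cij`, `Ckj`, `C₁`, `C₂` are the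
(two-sided) inverses of the relevant deleted submatrices witnessing definedness. -/
theorem stmt11 {D : Type*} [DivisionRing D] {n : ℕ}
    (A : Matrix (Fin (n+2)) (Fin (n+2)) D)
    (i k : Fin (n+2)) (hik : i ≠ k) (j l : Fin (n+2)) (hjl : j ≠ l)
    (i' : Fin (n+1)) (hi' : k.succAbove i' = i)
    (k' : Fin (n+1)) (hk' : i.succAbove k' = k)
    (l₁ : Fin (n+1)) (hl₁ : j.succAbove l₁ = l)
    (Cij : Matrix (Fin (n+1)) (Fin (n+1)) D)
    (hCij : A.submatrix i.succAbove j.succAbove * Cij = 1 ∧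
            Cij * A.submatrix i.succAbove j.succAbove = 1)
    (Ckj : Matrix (Fin (n+1)) (Fin (n+1)) D)
    (hCkj : A.submatrix k.succAbove j.succAbove * Ckj = 1 ∧
            Ckj * A.submatrix k.succAbove j.succAbove = 1)
    (C₁ : Matrix (Fin n) (Fin n) D)
    (hC₁ : (A.submatrix k.succAbove j.succAbove).submatrix i'.succAbove l₁.succAbove * C₁ = 1 ∧
           C₁ * (A.submatrix k.succAbove j.succAbove).submatrix i'.succAbove l₁.succAbove = 1)
    (C₂ : Matrix (Fin n) (Fin n) D)
    (hC₂ : (A.submatrix i.succAbove j.succAbove).submatrix k'.succAbove l₁.succAbove * C₂ = 1 ∧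
           C₂ * (A.submatrix i.succAbove j.succAbove).submatrix k'.succAbove l₁.succAbove = 1)
    (h₁ : qdCore (A.submatrix k.succAbove j.succAbove) i' l₁ C₁ ≠ 0)
    (h₂ : qdCore (A.submatrix i.succAbove j.succAbove) k' l₁ C₂ ≠ 0) :
    -(qdCore (A.submatrix k.succAbove j.succAbove) i' l₁ C₁)⁻¹ * qdCore A i j Cij =
      (qdCore (A.submatrix i.succAbove j.succAbove) k' l₁ C₂)⁻¹ * qdCore A k j Ckj := by
  obtain ⟨v, hvj, hv⟩ := exists_vector_killed A i j Cij hCij.1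
  obtain ⟨w, hwj, hw⟩ := exists_vector_killed A k j Ckj hCkj.1
  have hvi := row_eq_qdCore_mul A i j Cij hCij.2 v hv
  have hwk := row_eq_qdCore_mul A k j Ckj hCkj.2 w hw
  rw [hvj, mul_one] at hvi
  rw [hwj, mul_one] at hwk
  have hv' : ∀ r, r ≠ i → ∑ c, A r c * v c = 0 := by
    intro r hr
    obtain ⟨s, rfl⟩ := Fin.exists_succAbove_eq hr
    exact hv s
  have hw' : ∀ r, r ≠ k → ∑ c, A r c * w c = 0 := by
    intro r hr
    obtain ⟨s, rfl⟩ := Fin.exists_succAbove_eq hr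
    exact hw s
  -- As `v - w` vanishes at `j`, column `j` may be dropped from `A (v - w)`.
  have hu : ∀ r, ∑ c, A r (j.succAbove c) * (v (j.succAbove c) - w (j.succAbove c)) =
      ∑ c, A r c * v c - ∑ c, A r c * w c := by
    intro r
    rw [← Finset.sum_sub_distrib, Fin.sum_univ_succAbove _ j]
    simp [hvj, hwj, mul_sub]
  have e₁ := row_eq_qdCore_mul (A.submatrix k.succAbove j.succAbove) i' l₁ C₁ hC₁.2
    (fun c => v (j.succAbove c) - w (j.succAbove c)) (by
      intro r
      simp only [Matrix.submatrix_apply]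
      rw [hu, hw' _ (Fin.succAbove_ne _ _), hv', sub_zero]
      intro h
      exact Fin.succAbove_ne i' r (Fin.succAbove_right_injective (h.trans hi'.symm)))
  have e₂ := row_eq_qdCore_mul (A.submatrix i.succAbove j.succAbove) k' l₁ C₂ hC₂.2
    (fun c => v (j.succAbove c) - w (j.succAbove c)) (by
      intro r
      simp only [Matrix.submatrix_apply]
      rw [hu, hv' _ (Fin.succAbove_ne _ _), hw', sub_zero]
      intro h
      exact Fin.succAbove_ne k' r (Fin.succAbove_right_injective (h.trans hk'.symm)))
  simp only [Matrix.submatrix_apply] at e₁ e₂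
  rw [hu, hi', hvi, hw' i hik, sub_zero] at e₁
  rw [hu, hk', hwk, hv' k hik.symm, zero_sub] at e₂
  rw [e₁, neg_eq_iff_eq_neg.mp e₂, neg_mul, mul_neg, inv_mul_cancel_left₀ h₁,
    inv_mul_cancel_left₀ h₂]
end

section
/- Let D be a division ring and A = (a_{ij}) an invertible n×n matrix over D. Fix a position (r,s) and a column index l ≠ s, and suppose all quasideterminants appearing below are defined, with |A^{rs}|_{il} ≠ 0 for every i ≠ r and |A|_{is} ≠ 0 for every i. Then the one-column expansion of the quasideterminant holds: |A|_{rs} = a_{rs} − ∑_{i≠r} |A^{is}|_{rl}·(|A^{rs}|_{il})^{−1}·a_{is}. -/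
/-- The right-hand side is the `(i,l)`-quasideterminant of `M` with its row `i` replaced by
`ξ`. -/
lemma row_mul_inv_mul_qdCore {R : Type*} [Ring R] {n : ℕ}
    (M N : Matrix (Fin (n+1)) (Fin (n+1)) R) (hNM : N * M = 1) (i l : Fin (n+1))
    (C : Matrix (Fin n) (Fin n) R) (hC : M.submatrix i.succAbove l.succAbove * C = 1)
    (ξ : Fin (n+1) → R) :
    (∑ j, ξ j * N j i) * qdCore M i l C =
      ξ l - ∑ a, ∑ k, ξ (l.succAbove a) * C a k * M (i.succAbove k) l := by
  set w : Fin n → R := C.mulVec fun k => M (i.succAbove k) l with hw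
  set v : Fin (n+1) → R := l.insertNth (1 : R) (-w : Fin n → R) with hv
  have key : ∀ η : Fin (n+1) → R, ∑ j, η j * v j =
      η l - ∑ a, ∑ k, η (l.succAbove a) * C a k * M (i.succAbove k) l := by
    intro η
    rw [Fin.sum_univ_succAbove _ l]
    simp [hv, hw, Matrix.mulVec, dotProduct, Finset.mul_sum, mul_assoc, sub_eq_add_neg]
  have hMv : M.mulVec v = Pi.single i (qdCore M i l C) := by
    funext p
    rcases Fin.eq_self_or_eq_succAbove i p with rfl | ⟨p, rfl⟩
    · rw [Pi.single_eq_same]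
      exact key (M p)
    · rw [Pi.single_eq_of_ne (Fin.succAbove_ne i p)]
      refine (key (M (i.succAbove p))).trans ?_
      have h : (M.submatrix i.succAbove l.succAbove).mulVec w p = M (i.succAbove p) l := by
        rw [hw, Matrix.mulVec_mulVec, hC, Matrix.one_mulVec]
      rw [sub_eq_zero, ← h]
      simp [hw, Matrix.mulVec, dotProduct, Finset.mul_sum, mul_assoc]
  have hN : ∀ j, N j i * qdCore M i l C = v j := by
    intro j
    have h : N.mulVec (M.mulVec v) = v := by
      rw [Matrix.mulVec_mulVec, hNM, Matrix.one_mulVec]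
    rw [hMv] at h
    simpa [Matrix.mulVec, dotProduct, Pi.single_apply] using congrFun h j
  rw [← key ξ, Finset.sum_mul]
  exact Finset.sum_congr rfl fun j _ => by rw [mul_assoc, hN]

/-- One-column expansion of the quasideterminant over a division ring:
for an invertible `A` (with two-sided inverse `B`), a position `(r,s)` and a column
`l ≠ s`, assuming all the quasideterminants involved are defined
(witnessed by the two-sided inverses `C i₁`, `C' i₁`, `Dm i` of the relevant deleted
submatrices) with `|A^{rs}|_{il} ≠ 0` for all `i ≠ r` and `|A|_{is} ≠ 0` for all `i`,
`|A|_{rs} = a_{rs} − ∑_{i≠r} |A^{is}|_{rl}·(|A^{rs}|_{il})⁻¹·a_{is}`.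
Rows `i ≠ r` are parametrized as `i = r.succAbove i₁`; `ri i₁` is the index of row `r`
inside `A^{is}`, and `l₁` the index of column `l` after column `s` is deleted. -/
theorem stmt12 {D : Type*} [DivisionRing D] {n : ℕ}
    (A B : Matrix (Fin (n+2)) (Fin (n+2)) D) (hAB : A * B = 1) (hBA : B * A = 1)
    (r s l : Fin (n+2)) (hls : l ≠ s)
    (l₁ : Fin (n+1)) (hl₁ : s.succAbove l₁ = l)
    (ri : Fin (n+1) → Fin (n+1)) (hri : ∀ i₁, (r.succAbove i₁).succAbove (ri i₁) = r)
    (C : Fin (n+1) → Matrix (Fin n) (Fin n) D)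
    (hC : ∀ i₁,
      (A.submatrix (r.succAbove i₁).succAbove s.succAbove).submatrix
          (ri i₁).succAbove l₁.succAbove * C i₁ = 1 ∧
      C i₁ * (A.submatrix (r.succAbove i₁).succAbove s.succAbove).submatrix
          (ri i₁).succAbove l₁.succAbove = 1)
    (C' : Fin (n+1) → Matrix (Fin n) (Fin n) D)
    (hC' : ∀ i₁,
      (A.submatrix r.succAbove s.succAbove).submatrix i₁.succAbove l₁.succAbove * C' i₁ = 1 ∧
      C' i₁ * (A.submatrix r.succAbove s.succAbove).submatrix i₁.succAbove l₁.succAbove = 1)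
    (hne : ∀ i₁, qdCore (A.submatrix r.succAbove s.succAbove) i₁ l₁ (C' i₁) ≠ 0)
    (Dm : Fin (n+2) → Matrix (Fin (n+1)) (Fin (n+1)) D)
    (hDm : ∀ i, A.submatrix i.succAbove s.succAbove * Dm i = 1 ∧
                Dm i * A.submatrix i.succAbove s.succAbove = 1)
    (hAis : ∀ i, qdCore A i s (Dm i) ≠ 0) :
    qdCore A r s (Dm r) =
      A r s - ∑ i₁ : Fin (n+1),
        qdCore (A.submatrix (r.succAbove i₁).succAbove s.succAbove) (ri i₁) l₁ (C i₁) *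
          (qdCore (A.submatrix r.succAbove s.succAbove) i₁ l₁ (C' i₁))⁻¹ *
          A (r.succAbove i₁) s := by
  have hrows : ∀ i₁ k, (r.succAbove i₁).succAbove ((ri i₁).succAbove k) =
      r.succAbove (i₁.succAbove k) := by
    intro i₁ k
    have h : ri i₁ = i₁.predAbove r :=
      Fin.succAbove_right_injective (p := r.succAbove i₁)
        ((hri i₁).trans (Fin.succAbove_succAbove_predAbove r i₁).symm)
    rw [h, Fin.succAbove_succAbove_succAbove_predAbove]
  have hcoef : ∀ i₁, ∑ j, A r (s.succAbove j) * Dm r j i₁ =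
      qdCore (A.submatrix (r.succAbove i₁).succAbove s.succAbove) (ri i₁) l₁ (C i₁) *
        (qdCore (A.submatrix r.succAbove s.succAbove) i₁ l₁ (C' i₁))⁻¹ := by
    intro i₁
    have hP : (A.submatrix (r.succAbove i₁).succAbove s.succAbove).submatrix
        (ri i₁).succAbove l₁.succAbove =
        (A.submatrix r.succAbove s.succAbove).submatrix i₁.succAbove l₁.succAbove := by
      ext k a
      simp [hrows]
    have hCC : C i₁ = C' i₁ := by
      have h := (hC i₁).2
      rw [hP] at h
      exact left_inv_eq_right_inv h (hC' i₁).1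
    rw [eq_mul_inv_iff_mul_eq₀ (hne i₁),
      row_mul_inv_mul_qdCore _ _ (hDm r).2 i₁ l₁ _ (hC' i₁).1 fun j => A r (s.succAbove j)]
    simp [qdCore, hrows, hri, hCC]
  rw [qdCore, Finset.sum_comm]
  congr 1
  refine Finset.sum_congr rfl fun i₁ _ => ?_
  rw [← hcoef, Finset.sum_mul]
end
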